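/- arXiv:1308.4995 — 6 statements merged into one kernel-verified Lean document; each statement's English description precedes it below -/
import Mathlib

section
/- Let E be a complex Banach space, let T ∈ B(E) be a nonzero operator, and let λ ∈ ℂ be an extended eigenvalue of T such that the subspace 𝒳 = {X ∈ B(E) : TX = λXT} of all associated extended eigenoperators (together with 0) is localizing. Suppose that either (1) |λ| < 1, or (2) |λ| > 1, or (3) |λ| = 1 and T is quasinilpotent (its spectral radius is 0). Then T has a nontrivial hyperinvariant subspace, i.e. there exists a closed linear subspace F of E with F ≠ {0} and F ≠ E such that SF ⊆ F for every S ∈ B(E) with ST = TS. -/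
open Filter Topology

/-- A linear subspace `𝒳 ⊆ B(E)` is *localizing* if there exists a closed ball `B ⊆ E`
with `0 ∉ B` such that for every sequence in `B` there are a subsequence and operators
`X_j ∈ 𝒳` with `‖X_j‖ ≤ 1` such that `X_j x_{n_j}` converges in norm to a nonzero vector. -/
def IsLocalizing {E : Type*} [NormedAddCommGroup E] [NormedSpace ℂ E]
    (𝒳 : Set (E →L[ℂ] E)) : Prop :=
  ∃ (c : E) (r : ℝ), 0 < r ∧ (0 : E) ∉ Metric.closedBall c r ∧
    ∀ x : ℕ → E, (∀ n, x n ∈ Metric.closedBall c r) →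
      ∃ (n : ℕ → ℕ) (X : ℕ → E →L[ℂ] E) (y : E), StrictMono n ∧
        (∀ j, X j ∈ 𝒳) ∧ (∀ j, ‖X j‖ ≤ 1) ∧ y ≠ 0 ∧
        Tendsto (fun j => X j (x (n j))) atTop (𝓝 y)

/-!
Suppose that `T` has no nontrivial hyperinvariant subspace. Then `T` is injective and the orbit of
every nonzero vector under the commutant of `T` is dense, so a Lomonosov-type argument on the
localizing ball `B` gives a constant `C` such that each `x ∈ B` is moved back into `B` by `T Z` for
some `Z` with `T Z = λ Z T` and `‖Z‖ ≤ C`. Iterating from a point `c ∈ B` yields points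
`xₙ = T Zₙ ⋯ T Z₁ c` of `B`. With `W = Zₙ ⋯ Z₁`, moving all factors `T` to the right gives
`xₙ = λ ^ (n (n + 1) / 2) W Tⁿ c`, and moving them to the left gives
`λ ^ (n (n - 1) / 2) xₙ = Tⁿ W c`. The quadratic exponent beats the factor `Cⁿ ‖Tⁿ‖` when
`|λ| ≠ 1`, and `Cⁿ ‖Tⁿ‖ → 0` when `T` is quasinilpotent; either way `xₙ → 0`, although `B` stays
away from `0`.
-/

section Arithmetic

theorem choose_succ_two (n : ℕ) : (n + 1).choose 2 = n + n.choose 2 := by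
  rw [Nat.choose_succ_left n 2 two_pos, Nat.choose_one_right]

theorem choose_two_add_choose_succ_two (n : ℕ) : n.choose 2 + (n + 1).choose 2 = n * n := by
  induction n with
  | zero => rfl
  | succ n ih => linarith [choose_succ_two n, choose_succ_two (n + 1)]

variable {K : Type*} [Field K] [LinearOrder K] [IsStrictOrderedRing K]

theorem min_inv_le_one (x : K) : min x x⁻¹ ≤ 1 :=
  min_le_iff.2 ((le_total x 1).imp_right inv_le_one_of_one_le₀)

theorem min_inv_lt_one {x : K} (hx : x ≠ 1) : min x x⁻¹ < 1 :=
  min_lt_iff.2 (hx.lt_or_gt.imp_right inv_lt_one_of_one_lt₀)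

end Arithmetic

section Decay

theorem tendsto_pow_mul_pow_choose_two (D : ℝ) {q : ℝ} (hq₀ : 0 ≤ q) (hq₁ : q < 1) :
    Tendsto (fun n : ℕ ↦ D ^ n * q ^ n.choose 2) atTop (𝓝 0) := by
  have ratio_tendsto : Tendsto (fun n : ℕ ↦ |D| * q ^ n) atTop (𝓝 0) := by
    simpa using (tendsto_pow_atTop_nhds_zero_of_lt_one hq₀ hq₁).const_mul |D|
  refine (summable_of_ratio_norm_eventually_le one_half_lt_one ?_).tendsto_atTop_zero
  filter_upwards [ratio_tendsto.eventually_le_const one_half_pos] with n hn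
  calc ‖D ^ (n + 1) * q ^ (n + 1).choose 2‖
      = |D| * q ^ n * ‖D ^ n * q ^ n.choose 2‖ := by
        rw [choose_succ_two]
        simp only [norm_mul, norm_pow, Real.norm_eq_abs, abs_of_nonneg hq₀]
        ring
    _ ≤ 1 / 2 * ‖D ^ n * q ^ n.choose 2‖ := by gcongr

/-- The element `a` of a normed ring is quasinilpotent: `‖aⁿ‖ ^ (1 / n) → 0`. Unlike the vanishing
of `spectralRadius`, this is the usual notion also when the ring is not complete. -/
def IsQuasinilpotent {A : Type*} [SeminormedRing A] (a : A) : Prop :=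
  Tendsto (fun n : ℕ ↦ ‖a ^ n‖ ^ (1 / n : ℝ)) atTop (𝓝 0)

theorem isQuasinilpotent_of_spectralRadius_eq_zero {A : Type*} [NormedRing A] [NormedAlgebra ℂ A]
    [CompleteSpace A] {a : A} (ha : spectralRadius ℂ a = 0) : IsQuasinilpotent a := by
  have gelfand := spectrum.pow_norm_pow_one_div_tendsto_nhds_spectralRadius a
  rw [ha] at gelfand
  refine ((ENNReal.tendsto_toReal ENNReal.zero_ne_top).comp gelfand).congr fun n ↦ ?_
  exact ENNReal.toReal_ofReal (by positivity)

variable {A : Type*} [SeminormedRing A]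

theorem IsQuasinilpotent.tendsto_pow_mul_norm_pow {a : A} (ha : IsQuasinilpotent a) (C : ℝ) :
    Tendsto (fun n : ℕ ↦ C ^ n * ‖a ^ n‖) atTop (𝓝 0) := by
  have root_tendsto : Tendsto (fun n : ℕ ↦ |C| * ‖a ^ n‖ ^ (1 / n : ℝ)) atTop (𝓝 0) := by
    simpa using ha.const_mul |C|
  refine squeeze_zero_norm' ?_
    (tendsto_pow_atTop_nhds_zero_of_lt_one one_half_pos.le (one_half_lt_one (α := ℝ)))
  filter_upwards [root_tendsto.eventually_le_const one_half_pos, eventually_ne_atTop 0]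
    with n hn hn₀
  calc ‖C ^ n * ‖a ^ n‖‖ = (|C| * ‖a ^ n‖ ^ (1 / n : ℝ)) ^ n := by
        rw [mul_pow, one_div, Real.rpow_inv_natCast_pow (norm_nonneg _) hn₀, norm_mul, norm_pow,
          Real.norm_eq_abs, norm_norm]
    _ ≤ (1 / 2) ^ n := by gcongr

theorem tendsto_pow_choose_two_mul_norm_pow (a : A) (C : ℝ) {q : ℝ} (hq₀ : 0 ≤ q) (hq₁ : q < 1) :
    Tendsto (fun n : ℕ ↦ q ^ n.choose 2 * (C ^ n * ‖a ^ n‖)) atTop (𝓝 0) := by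
  refine squeeze_zero_norm' ?_ (tendsto_pow_mul_pow_choose_two (|C| * ‖a‖) hq₀ hq₁)
  filter_upwards [eventually_gt_atTop 0] with n hn
  calc ‖q ^ n.choose 2 * (C ^ n * ‖a ^ n‖)‖ = q ^ n.choose 2 * (|C| ^ n * ‖a ^ n‖) := by
        simp only [norm_mul, norm_pow, Real.norm_eq_abs, abs_of_nonneg hq₀, abs_norm]
    _ ≤ q ^ n.choose 2 * (|C| ^ n * ‖a‖ ^ n) := by
        gcongr
        exact norm_pow_le' a hn
    _ = (|C| * ‖a‖) ^ n * q ^ n.choose 2 := by ring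

theorem IsQuasinilpotent.tendsto_pow_choose_two_mul_norm_pow {a : A} (ha : IsQuasinilpotent a)
    (C : ℝ) {q : ℝ} (hq₀ : 0 ≤ q) (hq₁ : q ≤ 1) :
    Tendsto (fun n : ℕ ↦ q ^ n.choose 2 * (C ^ n * ‖a ^ n‖)) atTop (𝓝 0) := by
  refine squeeze_zero_norm (fun n ↦ ?_)
    (tendsto_zero_iff_norm_tendsto_zero.1 (ha.tendsto_pow_mul_norm_pow C))
  rw [norm_mul, norm_pow, Real.norm_of_nonneg hq₀]
  exact mul_le_of_le_one_left (norm_nonneg _) (pow_le_one₀ hq₀ hq₁)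

end Decay

section LambdaCommute

variable {R A : Type*} [CommSemiring R] [Semiring A] [Algebra R A] {l m : R} {T X Y : A}

/-- `X` is zero or an extended eigenoperator of `T` for the extended eigenvalue `l`. -/
def LambdaCommute (l : R) (T X : A) : Prop :=
  T * X = l • (X * T)

theorem lambdaCommute_one_iff : LambdaCommute (1 : R) T X ↔ Commute T X := by
  rw [LambdaCommute, one_smul, commute_iff_eq]

theorem LambdaCommute.mul (hX : LambdaCommute l T X) (hY : LambdaCommute m T Y) :
    LambdaCommute (l * m) T (X * Y) :=
  calc T * (X * Y) = l • (X * (T * Y)) := by rw [← mul_assoc, hX, smul_mul_assoc, mul_assoc]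
    _ = (l * m) • (X * Y * T) := by rw [hY, mul_smul_comm, smul_smul, mul_assoc]

theorem LambdaCommute.pow_left (hX : LambdaCommute l T X) (n : ℕ) :
    LambdaCommute (l ^ n) (T ^ n) X := by
  induction n with
  | zero => simp [LambdaCommute]
  | succ n ih =>
    calc T ^ (n + 1) * X = T ^ n * (T * X) := by rw [pow_succ, mul_assoc]
      _ = l • (T ^ n * X * T) := by rw [hX, mul_smul_comm, mul_assoc]
      _ = l ^ (n + 1) • (X * T ^ (n + 1)) := by
        rw [ih, smul_mul_assoc, smul_smul, mul_assoc, ← pow_succ, ← pow_succ']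

end LambdaCommute

section Operators

variable {𝕜 E : Type*} [NontriviallyNormedField 𝕜] [NormedAddCommGroup E] [NormedSpace 𝕜 E]
  {T : E →L[𝕜] E}

section Hyperinvariant

/-- The subspace `F` is invariant under every bounded operator commuting with `T`. -/
def IsHyperinvariant (T : E →L[𝕜] E) (F : Submodule 𝕜 E) : Prop :=
  ∀ S : E →L[𝕜] E, Commute S T → ∀ x ∈ F, S x ∈ F

theorem isHyperinvariant_ker (T : E →L[𝕜] E) : IsHyperinvariant T T.ker := by
  intro S hS x hx
  have hSx : S (T x) = T (S x) := DFunLike.congr_fun hS.eq x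
  rw [LinearMap.mem_ker] at hx ⊢
  simpa [show T x = 0 from hx] using hSx.symm

theorem IsHyperinvariant.topologicalClosure {F : Submodule 𝕜 E} (hF : IsHyperinvariant T F) :
    IsHyperinvariant T F.topologicalClosure :=
  fun S hS _ hx ↦ map_mem_closure S.continuous hx (hF S hS)

/-- The orbit of the vector `y` under the commutant of `T`. -/
noncomputable def commutantOrbit (T : E →L[𝕜] E) (y : E) : Submodule 𝕜 E :=
  (Subalgebra.centralizer 𝕜 {T}).toSubmodule.map (ContinuousLinearMap.apply 𝕜 E y).toLinearMap

theorem mem_commutantOrbit {y z : E} :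
    z ∈ commutantOrbit T y ↔ ∃ S : E →L[𝕜] E, Commute S T ∧ S y = z := by
  simp [commutantOrbit, Subalgebra.mem_centralizer_iff, commute_iff_eq, eq_comm]

theorem self_mem_commutantOrbit (T : E →L[𝕜] E) (y : E) : y ∈ commutantOrbit T y :=
  mem_commutantOrbit.2 ⟨1, .one_left T, rfl⟩

theorem isHyperinvariant_commutantOrbit (T : E →L[𝕜] E) (y : E) :
    IsHyperinvariant T (commutantOrbit T y) := by
  intro S hS z hz
  obtain ⟨R, hR, rfl⟩ := mem_commutantOrbit.1 hz
  exact mem_commutantOrbit.2 ⟨S * R, hS.mul_left hR, rfl⟩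

/-- `T` has no nontrivial closed hyperinvariant subspace. -/
def IsHypertransitive (T : E →L[𝕜] E) : Prop :=
  ∀ F : Submodule 𝕜 E, IsClosed (F : Set E) → IsHyperinvariant T F → F = ⊥ ∨ F = ⊤

theorem IsHypertransitive.ker_eq_bot (hT : IsHypertransitive T) (hT₀ : T ≠ 0) : T.ker = ⊥ := by
  refine (hT _ T.isClosed_ker (isHyperinvariant_ker T)).resolve_right fun htop ↦ hT₀ ?_
  exact ContinuousLinearMap.coe_injective (LinearMap.ker_eq_top.1 htop)

theorem IsHypertransitive.dense_commutantOrbit (hT : IsHypertransitive T) {y : E} (hy : y ≠ 0) :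
    Dense (commutantOrbit T y : Set E) := by
  rw [Submodule.dense_iff_topologicalClosure_eq_top]
  refine (hT _ (Submodule.isClosed_topologicalClosure _)
    (isHyperinvariant_commutantOrbit T y).topologicalClosure).resolve_left fun hbot ↦ hy ?_
  rw [← Submodule.mem_bot 𝕜, ← hbot]
  exact Submodule.le_topologicalClosure _ (self_mem_commutantOrbit T y)

theorem IsHypertransitive.exists_commute_apply_mem (hT : IsHypertransitive T) (hT₀ : T ≠ 0)
    {U : Set E} (hU : IsOpen U) (hne : U.Nonempty) {y : E} (hy : y ≠ 0) :
    ∃ S : E →L[𝕜] E, Commute S T ∧ T (S y) ∈ U := by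
  have hTy : T y ≠ 0 := fun h ↦ hy <| LinearMap.ker_eq_bot'.1 (hT.ker_eq_bot hT₀) y h
  obtain ⟨z, hzU, hz⟩ := (hT.dense_commutantOrbit hTy).inter_open_nonempty U hU hne
  obtain ⟨S, hS, rfl⟩ := mem_commutantOrbit.1 hz
  have hSy : S (T y) = T (S y) := DFunLike.congr_fun hS.eq y
  exact ⟨S, hS, hSy ▸ hzU⟩

end Hyperinvariant

section Localizing

variable {𝒳 𝒮 : Set (E →L[𝕜] E)} {B U : Set E}

/-- The property of the ball in `IsLocalizing`, for an arbitrary set `B` and base field `𝕜`: every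
sequence in `B` has a subsequence that contractions from `𝒳` turn into one with a nonzero limit. -/
def LocalizesOn (𝒳 : Set (E →L[𝕜] E)) (B : Set E) : Prop :=
  ∀ x : ℕ → E, (∀ n, x n ∈ B) →
    ∃ (n : ℕ → ℕ) (X : ℕ → E →L[𝕜] E) (y : E), StrictMono n ∧
      (∀ j, X j ∈ 𝒳) ∧ (∀ j, ‖X j‖ ≤ 1) ∧ y ≠ 0 ∧
      Tendsto (fun j ↦ X j (x (n j))) atTop (𝓝 y)

theorem IsLocalizing.exists_localizesOn {E : Type*} [NormedAddCommGroup E] [NormedSpace ℂ E]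
    {𝒳 : Set (E →L[ℂ] E)} (h𝒳 : IsLocalizing 𝒳) :
    ∃ B : Set E, (interior B).Nonempty ∧ (0 : E) ∉ closure B ∧ LocalizesOn 𝒳 B := by
  obtain ⟨c, r, hr, h₀, hloc⟩ := h𝒳
  refine ⟨Metric.closedBall c r, ?_, by rwa [Metric.isClosed_closedBall.closure_eq], hloc⟩
  exact ⟨c, mem_interior_iff_mem_nhds.2 (Metric.closedBall_mem_nhds c hr)⟩

theorem LocalizesOn.exists_norm_mul_le (h𝒳 : LocalizesOn 𝒳 B) (hU : IsOpen U)
    (h𝒮 : ∀ y ≠ 0, ∃ S ∈ 𝒮, S y ∈ U) :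
    ∃ C : ℝ, ∀ x ∈ B, ∃ S ∈ 𝒮, ∃ X ∈ 𝒳, ‖S * X‖ ≤ C ∧ S (X x) ∈ U := by
  by_contra! hunbounded
  choose x hxB hx using fun k : ℕ ↦ hunbounded k
  obtain ⟨n, X, y, hn, hX, hX₁, hy, hlim⟩ := h𝒳 x hxB
  obtain ⟨S, hS, hSy⟩ := h𝒮 y hy
  have eventually_mem : ∀ᶠ j in atTop, S (X j (x (n j))) ∈ U :=
    ((S.continuous.tendsto y).comp hlim).eventually_mem (hU.mem_nhds hSy)
  have eventually_norm_le : ∀ᶠ j in atTop, ‖S‖ ≤ n j :=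
    (tendsto_natCast_atTop_atTop.comp hn.tendsto_atTop).eventually_ge_atTop ‖S‖
  obtain ⟨j, hmem, hnorm⟩ := (eventually_mem.and eventually_norm_le).exists
  refine hx (n j) S hS (X j) (hX j) ?_ hmem
  calc ‖S * X j‖ ≤ ‖S‖ * ‖X j‖ := norm_mul_le _ _
    _ ≤ ‖S‖ := mul_le_of_le_one_right (norm_nonneg _) (hX₁ j)
    _ ≤ n j := hnorm

end Localizing

section Iteration

variable {l : 𝕜} {B : Set E} {C : ℝ} {c : E}

theorem IsHypertransitive.exists_lambdaCommute_apply_mem (hT : IsHypertransitive T) (hT₀ : T ≠ 0)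
    (hB : (interior B).Nonempty) (hloc : LocalizesOn {X | LambdaCommute l T X} B) :
    ∃ C : ℝ, ∀ x ∈ B, ∃ Z : E →L[𝕜] E, LambdaCommute l T Z ∧ ‖Z‖ ≤ C ∧ T (Z x) ∈ B := by
  obtain ⟨C, hC⟩ := hloc.exists_norm_mul_le (𝒮 := {S | Commute S T})
    (isOpen_interior.preimage T.continuous)
    fun y hy ↦ hT.exists_commute_apply_mem hT₀ isOpen_interior hB hy
  refine ⟨C, fun x hx ↦ ?_⟩
  obtain ⟨S, hS, X, hX, hnorm, hmem⟩ := hC x hx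
  have hSX : LambdaCommute (1 * l) T (S * X) := (lambdaCommute_one_iff.2 hS.symm).mul hX
  exact ⟨S * X, one_mul l ▸ hSX, hnorm, interior_subset hmem⟩

theorem exists_lambdaCommute_pow_smul_apply_mem
    (hstep : ∀ x ∈ B, ∃ Z : E →L[𝕜] E, LambdaCommute l T Z ∧ ‖Z‖ ≤ C ∧ T (Z x) ∈ B)
    (hc : c ∈ B) (n : ℕ) :
    ∃ W : E →L[𝕜] E, LambdaCommute (l ^ n) T W ∧ ‖W‖ ≤ C ^ n ∧
      l ^ (n + 1).choose 2 • W ((T ^ n) c) ∈ B := by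
  induction n with
  | zero => exact ⟨1, by simp [LambdaCommute], by simpa using! ContinuousLinearMap.norm_id_le,
      by simpa using hc⟩
  | succ n ih =>
    obtain ⟨W, hW, hWC, hWB⟩ := ih
    obtain ⟨Z, hZ, hZC, hZB⟩ := hstep _ hWB
    have hZW : LambdaCommute (l ^ (n + 1)) T (Z * W) := pow_succ' l n ▸ hZ.mul hW
    refine ⟨Z * W, hZW, ?_, ?_⟩
    · calc ‖Z * W‖ ≤ ‖Z‖ * ‖W‖ := norm_mul_le _ _
        _ ≤ C * C ^ n := mul_le_mul hZC hWC (norm_nonneg _) ((norm_nonneg _).trans hZC)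
        _ = C ^ (n + 1) := (pow_succ' C n).symm
    · have hTZW : T (Z (W ((T ^ n) c))) = l ^ (n + 1) • Z (W ((T ^ (n + 1)) c)) := by
        rw [pow_succ' T]
        exact DFunLike.congr_fun hZW ((T ^ n) c)
      rw [map_smul, map_smul, hTZW, smul_smul, ← pow_add] at hZB
      rwa [choose_succ_two (n + 1), add_comm]

theorem LambdaCommute.pow_choose_two_smul_apply {W : E →L[𝕜] E} {n : ℕ}
    (hW : LambdaCommute (l ^ n) T W) (c : E) :
    l ^ n.choose 2 • l ^ (n + 1).choose 2 • W ((T ^ n) c) = (T ^ n) (W c) := by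
  have hTW : (T ^ n) (W c) = (l ^ n) ^ n • W ((T ^ n) c) := DFunLike.congr_fun (hW.pow_left n) c
  rw [hTW, smul_smul, ← pow_add, choose_two_add_choose_succ_two, pow_mul]

-- For `l = 0` the junk value `0⁻¹ = 0` makes the minimum `0`, which is `‖l‖` as it should be.
theorem LambdaCommute.norm_pow_smul_apply_le {W : E →L[𝕜] E} {n : ℕ}
    (hW : LambdaCommute (l ^ n) T W) (c : E) :
    ‖l ^ (n + 1).choose 2 • W ((T ^ n) c)‖ ≤
      min ‖l‖ ‖l‖⁻¹ ^ n.choose 2 * (‖W‖ * ‖T ^ n‖) * ‖c‖ := by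
  have hWT : ‖W ((T ^ n) c)‖ ≤ ‖W‖ * ‖T ^ n‖ * ‖c‖ :=
    (W * T ^ n).le_of_opNorm_le (norm_mul_le _ _) c
  have hTW : ‖(T ^ n) (W c)‖ ≤ ‖W‖ * ‖T ^ n‖ * ‖c‖ :=
    (T ^ n * W).le_of_opNorm_le ((norm_mul_le _ _).trans_eq (mul_comm _ _)) c
  rw [mul_assoc]
  rcases le_or_gt ‖l‖ 1 with hl | hl
  · have hmin : min ‖l‖ ‖l‖⁻¹ = ‖l‖ := by
      rcases eq_or_ne l 0 with rfl | hl₀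
      · simp
      · exact min_eq_left (hl.trans ((one_le_inv₀ (norm_pos_iff.2 hl₀)).2 hl))
    rw [hmin, norm_smul, norm_pow]
    gcongr ?_ * ?_
    exact pow_le_pow_of_le_one (norm_nonneg l) hl (Nat.choose_le_succ n 2)
  · have hl₀ : 0 < ‖l‖ := one_pos.trans hl
    rw [min_eq_right ((inv_lt_one_of_one_lt₀ hl).trans hl).le, inv_pow,
      le_inv_mul_iff₀ (pow_pos hl₀ _), ← norm_pow, ← norm_smul, hW.pow_choose_two_smul_apply]
    exact hTW

theorem exists_seq_mem_norm_le
    (hstep : ∀ x ∈ B, ∃ Z : E →L[𝕜] E, LambdaCommute l T Z ∧ ‖Z‖ ≤ C ∧ T (Z x) ∈ B)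
    (hc : c ∈ B) :
    ∃ x : ℕ → E, (∀ n, x n ∈ B) ∧
      ∀ n, ‖x n‖ ≤ min ‖l‖ ‖l‖⁻¹ ^ n.choose 2 * (C ^ n * ‖T ^ n‖) * ‖c‖ := by
  choose W hW hWC hWB using exists_lambdaCommute_pow_smul_apply_mem hstep hc
  refine ⟨_, hWB, fun n ↦ ((hW n).norm_pow_smul_apply_le c).trans ?_⟩
  gcongr
  exact hWC n

end Iteration

theorem hyperinvariant_of_localizing_extended_eigenoperators_general (hT₀ : T ≠ 0) {l : 𝕜}
    {B : Set E} (hB : (interior B).Nonempty) (hB₀ : (0 : E) ∉ closure B)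
    (hloc : LocalizesOn {X | LambdaCommute l T X} B) (hl : ‖l‖ ≠ 1 ∨ IsQuasinilpotent T) :
    ∃ F : Submodule 𝕜 E, IsClosed (F : Set E) ∧ F ≠ ⊥ ∧ F ≠ ⊤ ∧ IsHyperinvariant T F := by
  by_contra! hno
  have hT : IsHypertransitive T := fun F hF hinv ↦
    or_iff_not_imp_left.2 fun hbot ↦ by_contra fun htop ↦ hno F hF hbot htop hinv
  obtain ⟨C, hstep⟩ := hT.exists_lambdaCommute_apply_mem hT₀ hB hloc
  obtain ⟨c, hc⟩ := hB
  obtain ⟨x, hxB, hx⟩ := exists_seq_mem_norm_le hstep (interior_subset hc)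
  have hq₀ : 0 ≤ min ‖l‖ ‖l‖⁻¹ := by positivity
  have bound_tendsto :
      Tendsto (fun n : ℕ ↦ min ‖l‖ ‖l‖⁻¹ ^ n.choose 2 * (C ^ n * ‖T ^ n‖)) atTop (𝓝 0) := by
    rcases hl with hl | hqn
    · exact tendsto_pow_choose_two_mul_norm_pow T C hq₀ (min_inv_lt_one hl)
    · exact hqn.tendsto_pow_choose_two_mul_norm_pow C hq₀ (min_inv_le_one ‖l‖)
  have x_tendsto : Tendsto x atTop (𝓝 0) :=
    squeeze_zero_norm hx (by simpa using bound_tendsto.mul_const ‖c‖)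
  exact hB₀ (mem_closure_of_tendsto x_tendsto (.of_forall hxB))

end Operators

/-- If `T ≠ 0` has an extended eigenvalue `λ` whose space of extended eigenoperators is
localizing, and `|λ| < 1`, `|λ| > 1`, or `|λ| = 1` with `T` quasinilpotent, then `T` has a
nontrivial hyperinvariant subspace. -/
theorem hyperinvariant_of_localizing_extended_eigenoperators
    {E : Type*} [NormedAddCommGroup E] [NormedSpace ℂ E] [CompleteSpace E]
    (T : E →L[ℂ] E) (hT0 : T ≠ 0) (l : ℂ)
    (hev : ∃ X : E →L[ℂ] E, X ≠ 0 ∧ T ∘L X = l • (X ∘L T))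
    (hloc : IsLocalizing {X : E →L[ℂ] E | T ∘L X = l • (X ∘L T)})
    (hl : ‖l‖ < 1 ∨ 1 < ‖l‖ ∨ (‖l‖ = 1 ∧ spectralRadius ℂ T = 0)) :
    ∃ F : Submodule ℂ E, IsClosed (F : Set E) ∧ F ≠ ⊥ ∧ F ≠ ⊤ ∧
      ∀ S : E →L[ℂ] E, S ∘L T = T ∘L S → ∀ x ∈ F, S x ∈ F := by
  obtain ⟨B, hB, hB₀, hlocB⟩ := hloc.exists_localizesOn
  exact hyperinvariant_of_localizing_extended_eigenoperators_general hT0 hB hB₀ hlocB <|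
    or_assoc.2 hl |>.imp ne_iff_lt_or_gt.2 fun h ↦ isQuasinilpotent_of_spectralRadius_eq_zero h.2
end

section
/- Let (z_k) be a sequence of complex numbers in the open unit disc 𝔻 such that the closure of {z_k : k ≥ 1} contains the unit circle ∂𝔻 and is disjoint from the interval [0,1/2], let μ be the measure on ℂ given by μ = λ|_{[0,1/2]} + Σ_{k≥1} 2^{-k-1} δ_{z_k} (Lebesgue measure restricted to [0,1/2] plus weighted Dirac masses at the z_k), and let 𝓡 = {p(M_z) : p a polynomial} ⊆ B(L²(μ)), where M_z is multiplication by the identity function. Then 𝓡 is not a localizing algebra on the Hilbert space L²(μ). -/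
open Filter Topology MeasureTheory

/-- The measure `μ = λ|_{[0,1/2]} + ∑_{k≥1} 2^{-k-1} δ_{z_k}` on `ℂ` (the sequence is
indexed here by `k : ℕ` starting at `0`, with weights `2^{-(k+2)} = 2^{-(k+1)-1}`). -/
noncomputable def paperMeasure (z : ℕ → ℂ) : Measure ℂ :=
  Measure.map Complex.ofReal (volume.restrict (Set.Icc 0 (1/2))) +
    Measure.sum (fun k : ℕ => ((2 : ENNReal) ^ (k + 2))⁻¹ • Measure.dirac (z k))

/-!
Operators of norm at most one in the algebra come from polynomials bounded by one on the support of
`μ`, hence on the unit circle, so by Montel's theorem a subsequence converges pointwise on the open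
disc to a holomorphic `h`. Perturb the centre `c` of a candidate ball by small multiples of the
exponentials `w ↦ exp (2πi n Re w)`. If `h = 0`, the images of the perturbed vectors can only
converge to `0`. If `h ≠ 0`, then `h` vanishes only on a countable set, so convergence of the images
forces a subsequence of the exponentials to converge almost everywhere on a part of the real line of
positive Lebesgue measure, which the Riemann–Lebesgue lemma excludes.
-/

open scoped ENNReal FourierTransform

section MultiplicationOperators

variable {α 𝕜 : Type*} [MeasurableSpace α] [RCLike 𝕜] {μ : Measure α} {q : ℝ≥0∞} [Fact (1 ≤ q)]

theorem measure_eq_zero_of_opNorm_lt_of_le_norm {X : Lp 𝕜 q μ →L[𝕜] Lp 𝕜 q μ} {φ : α → 𝕜}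
    (hX : ∀ f : Lp 𝕜 q μ, ⇑(X f) =ᵐ[μ] fun w => φ w * f w) {b : ℝ} (hb : ‖X‖ < b)
    {A : Set α} (hA : MeasurableSet A) (hμA : μ A ≠ ∞) (hφA : ∀ w ∈ A, b ≤ ‖φ w‖) : μ A = 0 := by
  let f : Lp 𝕜 q μ := indicatorConstLp q hA hμA 1
  have hf : ⇑f =ᵐ[μ] A.indicator fun _ => 1 := indicatorConstLp_coeFn
  have hb0 : 0 < b := (norm_nonneg X).trans_lt hb
  have hle : ‖f‖ ≤ b⁻¹ * ‖X f‖ := by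
    refine Lp.norm_le_mul_norm_of_ae_le_mul ?_
    filter_upwards [hX f, hf] with w hXw hfw
    rw [hXw, hfw, norm_mul, ← mul_assoc]
    by_cases hw : w ∈ A
    · simpa [hw, le_inv_mul_iff₀ hb0] using hφA w hw
    · simp [hw]
  have hf0 : f = 0 := by
    by_contra hne
    have hlt : ‖X f‖ < b * ‖f‖ :=
      (X.le_opNorm f).trans_lt (mul_lt_mul_of_pos_right hb (norm_pos_iff.2 hne))
    exact (hle.trans_lt ((inv_mul_lt_iff₀ hb0).2 hlt)).false
  have hind : A.indicator (fun _ => (1 : 𝕜)) =ᵐ[μ] 0 :=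
    hf.symm.trans (hf0 ▸ Lp.coeFn_zero 𝕜 q μ)
  rwa [Set.indicator_ae_eq_zero, Function.support_const one_ne_zero, Set.inter_univ] at hind

theorem ae_norm_le_opNorm [IsFiniteMeasure μ] {X : Lp 𝕜 q μ →L[𝕜] Lp 𝕜 q μ} {φ : α → 𝕜}
    (hX : ∀ f : Lp 𝕜 q μ, ⇑(X f) =ᵐ[μ] fun w => φ w * f w) : ∀ᵐ w ∂μ, ‖φ w‖ ≤ ‖X‖ := by
  -- `X 1` is a measurable representative of `φ`.
  let ψ : α → 𝕜 := X (Lp.const q μ 1)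
  have hψ : ψ =ᵐ[μ] φ := by
    filter_upwards [hX (Lp.const q μ 1), Lp.coeFn_const q μ (1 : 𝕜)] with w hXw hw
    simp only [ψ, hXw, hw, Function.const_apply, mul_one]
  have hXψ (f : Lp 𝕜 q μ) : ⇑(X f) =ᵐ[μ] fun w => ψ w * f w := by
    filter_upwards [hX f, hψ] with w hXw hw
    rw [hXw, hw]
  have hψm : Measurable ψ := (Lp.stronglyMeasurable _).measurable
  have hψ_le : ∀ᵐ w ∂μ, ‖ψ w‖ ≤ ‖X‖ :=
    (ae_le_const_iff_forall_gt_measure_zero _ _).2 fun b hb =>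
      measure_eq_zero_of_opNorm_lt_of_le_norm hXψ hb (measurableSet_le measurable_const hψm.norm)
        (measure_ne_top _ _) fun _ hw => hw
  filter_upwards [hψ_le, hψ] with w hle hw
  rwa [← hw]

theorem norm_le_opNorm_of_mem_support [TopologicalSpace α] [IsFiniteMeasure μ]
    {X : Lp 𝕜 q μ →L[𝕜] Lp 𝕜 q μ} {φ : α → 𝕜} (hφ : Continuous φ)
    (hX : ∀ f : Lp 𝕜 q μ, ⇑(X f) =ᵐ[μ] fun w => φ w * f w) {w : α} (hw : w ∈ μ.support) :
    ‖φ w‖ ≤ ‖X‖ :=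
  Measure.support_subset_of_isClosed (isClosed_le hφ.norm continuous_const)
    (ae_norm_le_opNorm hX) hw

theorem exists_subseq_ae_tendsto_mul {X : ℕ → Lp 𝕜 q μ →L[𝕜] Lp 𝕜 q μ} {φ : ℕ → α → 𝕜}
    (hX : ∀ j, ∀ f : Lp 𝕜 q μ, ⇑(X j f) =ᵐ[μ] fun w => φ j w * f w) {x : ℕ → Lp 𝕜 q μ}
    {y : Lp 𝕜 q μ} (hlim : Tendsto (fun j => X j (x j)) atTop (𝓝 y)) :
    ∃ ψ : ℕ → ℕ, StrictMono ψ ∧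
      ∀ᵐ w ∂μ, Tendsto (fun j => φ (ψ j) w * x (ψ j) w) atTop (𝓝 (y w)) := by
  obtain ⟨ψ, hψ, hae⟩ := (tendstoInMeasure_of_tendsto_Lp hlim).exists_seq_tendsto_ae
  refine ⟨ψ, hψ, ?_⟩
  filter_upwards [hae, ae_all_iff.2 fun j => hX j (x j)] with w hw hXw
  exact hw.congr fun j => hXw (ψ j)

end MultiplicationOperators

section Montel

theorem analyticOnNhd_tsum_mul_pow {a : ℕ → ℂ} {C r : ℝ} (hr : 0 < r)
    (ha : ∀ n, ‖a n‖ ≤ C / r ^ n) (c : ℂ) :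
    AnalyticOnNhd ℂ (fun w => ∑' n, a n * (w - c) ^ n) (Metric.ball c r) := by
  lift r to NNReal using hr.le
  let s := FormalMultilinearSeries.ofScalars ℂ a
  have hrs : (r : ℝ≥0∞) ≤ s.radius := by
    refine s.le_radius_of_bound C fun n => ?_
    rw [FormalMultilinearSeries.ofScalars_norm]
    exact (le_div_iff₀ (pow_pos hr n)).1 (ha n)
  have hs : s.sum = fun w => ∑' n, a n * w ^ n :=
    FormalMultilinearSeries.ofScalarsSum_eq_tsum (E := ℂ) a
  have hpos : 0 < s.radius := lt_of_lt_of_le (by exact_mod_cast hr) hrs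
  have hseries := (s.hasFPowerSeriesOnBall hpos).comp_sub c
  simp only [zero_add, hs] at hseries
  refine hseries.analyticOnNhd.mono ?_
  rw [← Metric.eball_coe]
  exact Metric.eball_subset_eball hrs

theorem norm_inv_factorial_mul_iteratedDeriv_le {f : ℂ → ℂ} {c : ℂ} {r C : ℝ} (hr : 0 < r)
    (hf : DiffContOnCl ℂ f (Metric.ball c r)) (hC : ∀ w ∈ Metric.sphere c r, ‖f w‖ ≤ C) (n : ℕ) :
    ‖(n.factorial : ℂ)⁻¹ * iteratedDeriv n f c‖ ≤ C / r ^ n := by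
  have hn : (0 : ℝ) < n.factorial := by positivity
  rw [norm_mul, norm_inv, Complex.norm_natCast, inv_mul_le_iff₀ hn, ← mul_div_assoc]
  exact Complex.norm_iteratedDeriv_le_of_forall_mem_sphere_norm_le n hr hf hC

theorem eq_tsum_inv_factorial_mul_iteratedDeriv {f : ℂ → ℂ} {c w : ℂ} {r : ℝ}
    (hf : DifferentiableOn ℂ f (Metric.ball c r)) (hw : w ∈ Metric.ball c r) :
    f w = ∑' n : ℕ, (n.factorial : ℂ)⁻¹ * iteratedDeriv n f c * (w - c) ^ n := by
  rw [← Complex.taylorSeries_eq_on_ball hf hw]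
  exact tsum_congr fun n => by simp only [smul_eq_mul]; ring

-- Cauchy's estimates confine the Taylor coefficients to a product of discs, compact by Tychonoff.
theorem exists_subseq_tendsto_analyticOnNhd {f : ℕ → ℂ → ℂ} {c : ℂ} {r C : ℝ} (hr : 0 < r)
    (hf : ∀ j, DiffContOnCl ℂ (f j) (Metric.ball c r))
    (hC : ∀ j, ∀ w ∈ Metric.sphere c r, ‖f j w‖ ≤ C) :
    ∃ (φ : ℕ → ℕ) (h : ℂ → ℂ), StrictMono φ ∧ AnalyticOnNhd ℂ h (Metric.ball c r) ∧
      ∀ w ∈ Metric.ball c r, Tendsto (fun j => f (φ j) w) atTop (𝓝 (h w)) := by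
  let t : ℕ → ℕ → ℂ := fun j n => (n.factorial : ℂ)⁻¹ * iteratedDeriv n (f j) c
  have ht (j n : ℕ) : ‖t j n‖ ≤ C / r ^ n :=
    norm_inv_factorial_mul_iteratedDeriv_le hr (hf j) (hC j) n
  have hcompact : IsCompact (Set.univ.pi fun n : ℕ => Metric.closedBall (0 : ℂ) (C / r ^ n)) :=
    isCompact_univ_pi fun _ => isCompact_closedBall _ _
  obtain ⟨a, ha, φ, hφ, hlim⟩ := hcompact.tendsto_subseq (x := t)
    fun j n _ => mem_closedBall_zero_iff.2 (ht j n)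
  have ha' (n : ℕ) : ‖a n‖ ≤ C / r ^ n := mem_closedBall_zero_iff.1 (ha n trivial)
  refine ⟨φ, _, hφ, analyticOnNhd_tsum_mul_pow hr ha' c, fun w hw => ?_⟩
  simp_rw [fun j => eq_tsum_inv_factorial_mul_iteratedDeriv (hf j).differentiableOn hw]
  have hratio : ‖w - c‖ / r < 1 := (div_lt_one hr).2 (mem_ball_iff_norm.1 hw)
  refine tendsto_tsum_of_dominated_convergence (bound := fun n => C * (‖w - c‖ / r) ^ n)
    ((summable_geometric_of_lt_one (by positivity) hratio).mul_left C)
    (fun n => (tendsto_pi_nhds.1 hlim n).mul_const _) (Eventually.of_forall fun j n => ?_)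
  calc ‖t (φ j) n * (w - c) ^ n‖ = ‖t (φ j) n‖ * ‖w - c‖ ^ n := by rw [norm_mul, norm_pow]
    _ ≤ C / r ^ n * ‖w - c‖ ^ n := by gcongr; exact ht _ n
    _ = C * (‖w - c‖ / r) ^ n := by rw [div_pow]; ring

theorem nullSingletonClass_map_of_injective {α β : Type*} [MeasurableSpace α] [MeasurableSpace β]
    [MeasurableSingletonClass β] {μ : Measure α} [NullSingletonClass μ] {f : α → β}
    (hf : Measurable f) (hinj : Function.Injective f) : NullSingletonClass (μ.map f) where
  measure_singleton b := by
    rw [Measure.map_apply hf (measurableSet_singleton b)]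
    exact (Set.subsingleton_singleton.preimage hinj).measure_zero μ

theorem eqOn_zero_or_ae_ne_zero {h : ℂ → ℂ} {U : Set ℂ} (hh : AnalyticOnNhd ℂ h U)
    (hU : IsPreconnected U) (hUm : MeasurableSet U) {ν : Measure ℂ} [NullSingletonClass ν]
    (hν : ∀ᵐ w ∂ν, w ∈ U) : Set.EqOn h 0 U ∨ ∀ᵐ w ∂ν, h w ≠ 0 := by
  refine (hh.eqOn_zero_or_eventually_ne_zero_of_preconnected hU).imp_right fun hne => ?_
  rw [← Measure.restrict_eq_self_of_ae_mem hν]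
  exact ae_restrict_le_codiscreteWithin hUm hne

end Montel

section Exponentials

theorem not_ae_exists_tendsto_fourierChar {S : Set ℝ} (hS : MeasurableSet S) (hS0 : volume S ≠ 0)
    {ξ : ℕ → ℝ} (hξ : Tendsto ξ atTop (cocompact ℝ)) :
    ¬ ∀ᵐ t ∂volume.restrict S, ∃ g : ℂ, Tendsto (fun j => (𝐞 (ξ j * t) : ℂ)) atTop (𝓝 g) := by
  intro hconv
  obtain ⟨T, hT, hTS, hT0, hTtop⟩ := Measure.exists_subset_measure_lt_top hS hS0.bot_lt
  obtain ⟨g, hgm, hg⟩ := measurable_limit_of_tendsto_metrizable_ae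
    (fun j => (by fun_prop : Continuous fun t : ℝ => (𝐞 (ξ j * t) : ℂ)).aemeasurable)
    (ae_restrict_of_ae_restrict_of_subset hTS hconv)
  have hgnorm : ∀ᵐ t ∂volume.restrict T, ‖g t‖ = 1 := by
    filter_upwards [hg] with t ht
    exact tendsto_nhds_unique ht.norm (by simp only [Circle.norm_coe, tendsto_const_nhds])
  have hzero : Tendsto (fun j => ∫ t in T, 𝐞 (-(t * ξ j)) • g t) atTop (𝓝 0) := by
    simp_rw [← integral_indicator hT, Set.indicator_smul]
    exact (Real.tendsto_integral_exp_smul_cocompact (T.indicator g)).comp hξ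
  have hone : Tendsto (fun j => ∫ t in T, 𝐞 (-(t * ξ j)) • g t) atTop (𝓝 (∫ _ in T, (1 : ℂ))) := by
    refine tendsto_integral_of_dominated_convergence (fun _ => 1) (fun j => ?_)
      (integrableOn_const hTtop.ne) (fun j => ?_) ?_
    · exact (Continuous.aestronglyMeasurable (by fun_prop)).smul hgm.aestronglyMeasurable
    · filter_upwards [hgnorm] with t ht using by simp [ht]
    · filter_upwards [hg, hgnorm] with t ht hnorm
      have hgt : g t ≠ 0 := norm_ne_zero_iff.1 (by simp [hnorm])
      have hlim := (ht.inv₀ hgt).mul_const (g t)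
      rw [inv_mul_cancel₀ hgt] at hlim
      refine hlim.congr fun j => ?_
      rw [Circle.smul_def, smul_eq_mul, AddChar.map_neg_eq_inv, Circle.coe_inv, mul_comm t]
  have hmass := tendsto_nhds_unique hzero hone
  have hT_real : volume.real T ≠ 0 := (ENNReal.toReal_pos hT0.ne' hTtop.ne).ne'
  rw [setIntegral_const, Complex.real_smul, mul_one] at hmass
  exact hT_real (by exact_mod_cast hmass.symm)

theorem memLp_fourierChar_re (μ : Measure ℂ) [IsFiniteMeasure μ] (q : ℝ≥0∞) (ξ : ℝ) :
    MemLp (fun w : ℂ => (𝐞 (ξ * w.re) : ℂ)) q μ :=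
  .of_bound (Continuous.aestronglyMeasurable (by fun_prop)) 1
    (.of_forall fun _ => (Circle.norm_coe _).le)

/-- The exponential `w ↦ exp (2πi ξ Re w)` as an element of `L^q(μ)`; these vectors perturb the
centre of a ball. -/
noncomputable def reExpLp (μ : Measure ℂ) [IsFiniteMeasure μ] (q : ℝ≥0∞) (ξ : ℝ) : Lp ℂ q μ :=
  (memLp_fourierChar_re μ q ξ).toLp

variable {μ : Measure ℂ} [IsFiniteMeasure μ] {q : ℝ≥0∞}

theorem coeFn_reExpLp (ξ : ℝ) : ⇑(reExpLp μ q ξ) =ᵐ[μ] fun w => (𝐞 (ξ * w.re) : ℂ) :=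
  (memLp_fourierChar_re μ q ξ).coeFn_toLp

theorem exists_forall_norm_reExpLp_le [Fact (1 ≤ q)] : ∃ M : ℝ, ∀ ξ, ‖reExpLp μ q ξ‖ ≤ M := by
  refine ⟨_, fun ξ => Lp.norm_le_of_ae_bound zero_le_one ?_⟩
  filter_upwards [coeFn_reExpLp ξ] with w hw
  rw [hw, Circle.norm_coe]

theorem ae_forall_coeFn_add_smul_reExpLp (c : Lp ℂ q μ) (ε : ℂ) (ξ : ℕ → ℝ) :
    ∀ᵐ w ∂μ, ∀ j, (c + ε • reExpLp μ q (ξ j)) w = c w + ε * (𝐞 (ξ j * w.re) : ℂ) := by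
  refine ae_all_iff.2 fun j => ?_
  filter_upwards [Lp.coeFn_add c (ε • reExpLp μ q (ξ j)), Lp.coeFn_smul ε (reExpLp μ q (ξ j)),
    coeFn_reExpLp (μ := μ) (q := q) (ξ j)] with w hadd hsmul hexp
  rw [hadd, Pi.add_apply, hsmul, Pi.smul_apply, hexp, smul_eq_mul]

end Exponentials

section Localizing

theorem IsLocalizing.exists_tendsto_add_smul {E : Type*} [NormedAddCommGroup E] [NormedSpace ℂ E]
    {𝒳 : Set (E →L[ℂ] E)} (h𝒳 : IsLocalizing 𝒳) {u : ℕ → E} {M : ℝ} (hu : ∀ n, ‖u n‖ ≤ M) :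
    ∃ (c : E) (ε : ℂ) (n : ℕ → ℕ) (X : ℕ → E →L[ℂ] E) (y : E), ε ≠ 0 ∧ StrictMono n ∧
      (∀ j, X j ∈ 𝒳) ∧ (∀ j, ‖X j‖ ≤ 1) ∧ y ≠ 0 ∧
      Tendsto (fun j => X j (c + ε • u (n j))) atTop (𝓝 y) := by
  obtain ⟨c, r, hr, -, hseq⟩ := h𝒳
  have hM : 0 < M + 1 := by linarith [(norm_nonneg (u 0)).trans (hu 0)]
  have hmem (n : ℕ) : c + ((r / (M + 1) : ℝ) : ℂ) • u n ∈ Metric.closedBall c r := by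
    rw [mem_closedBall_iff_norm, add_sub_cancel_left, norm_smul, Complex.norm_real,
      Real.norm_of_nonneg (by positivity)]
    calc r / (M + 1) * ‖u n‖ ≤ r / (M + 1) * (M + 1) := by gcongr; linarith [hu n]
      _ = r := div_mul_cancel₀ r hM.ne'
  obtain ⟨n, X, y, hX⟩ := hseq _ hmem
  exact ⟨c, _, n, X, y, by exact_mod_cast (div_pos hr hM).ne', hX⟩

theorem eq_zero_of_tendsto_mul_add_mul {a b : ℕ → ℂ} {c ε y : ℂ} (ha : Tendsto a atTop (𝓝 0))
    (hb : ∀ j, ‖b j‖ ≤ 1) (hab : Tendsto (fun j => a j * (c + ε * b j)) atTop (𝓝 y)) : y = 0 := by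
  refine tendsto_nhds_unique hab (ha.zero_mul_isBoundedUnder_le ?_)
  refine isBoundedUnder_of ⟨‖c‖ + ‖ε‖, fun j => (norm_add_le _ _).trans ?_⟩
  rw [norm_mul]
  gcongr
  exact mul_le_of_le_one_right (norm_nonneg ε) (hb j)

theorem exists_tendsto_of_tendsto_mul_add_mul {a b : ℕ → ℂ} {c ε y α : ℂ}
    (ha : Tendsto a atTop (𝓝 α)) (hα : α ≠ 0) (hε : ε ≠ 0)
    (hab : Tendsto (fun j => a j * (c + ε * b j)) atTop (𝓝 y)) :
    ∃ g, Tendsto b atTop (𝓝 g) := by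
  refine ⟨_, (((hab.div ha hα).sub_const c).div_const ε).congr' ?_⟩
  filter_upwards [ha.eventually_ne hα] with j hj
  rw [Pi.div_apply, mul_div_cancel_left₀ _ hj, add_sub_cancel_left, mul_div_cancel_left₀ _ hε]

end Localizing

section PaperMeasure

variable (z : ℕ → ℂ)

instance isFiniteMeasure_paperMeasure : IsFiniteMeasure (paperMeasure z) := by
  have hsum : ∑' k : ℕ, ((2 : ℝ≥0∞) ^ (k + 2))⁻¹ ≠ ∞ := by
    simp_rw [ENNReal.inv_pow, pow_add, ENNReal.tsum_mul_right, ENNReal.tsum_geometric]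
    norm_num [ENNReal.mul_eq_top]
  have : IsFiniteMeasure (Measure.sum
      fun k : ℕ => ((2 : ℝ≥0∞) ^ (k + 2))⁻¹ • Measure.dirac (z k)) :=
    ⟨by simpa [Measure.sum_apply _ MeasurableSet.univ] using hsum.lt_top⟩
  unfold paperMeasure
  infer_instance

theorem closure_range_subset_support_paperMeasure :
    closure (Set.range z) ⊆ (paperMeasure z).support := by
  refine closure_minimal ?_ Measure.isClosed_support
  rintro _ ⟨k, rfl⟩
  refine (Measure.mem_support_iff_forall _).2 fun U hU => ?_
  have hsmul : 0 < (((2 : ℝ≥0∞) ^ (k + 2))⁻¹ • Measure.dirac (z k)) U := by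
    simp [mem_of_mem_nhds hU]
  exact hsmul.trans_le ((Measure.le_sum _ k).trans (Measure.le_add_left le_rfl) U)

theorem map_ofReal_restrict_absolutelyContinuous_paperMeasure :
    (volume.restrict (Set.Icc (0 : ℝ) (1 / 2))).map Complex.ofReal ≪ paperMeasure z :=
  (Measure.le_add_right le_rfl).absolutelyContinuous

variable {z}

theorem ae_mem_ball_paperMeasure (hz : ∀ k, ‖z k‖ < 1) :
    ∀ᵐ w ∂paperMeasure z, w ∈ Metric.ball (0 : ℂ) 1 := by
  refine ae_add_measure_iff.2 ⟨?_, Measure.ae_sum_iff.2 fun k => ?_⟩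
  · refine (ae_map_iff Complex.measurable_ofReal.aemeasurable measurableSet_ball).2 ?_
    filter_upwards [ae_restrict_mem measurableSet_Icc] with t ht
    rw [dist_zero_right, Complex.norm_real, Real.norm_of_nonneg ht.1]
    linarith [ht.2]
  · have hzk : z k ∈ Metric.ball (0 : ℂ) 1 := mem_ball_zero_iff.2 (hz k)
    exact Measure.ae_smul_measure ((ae_dirac_iff measurableSet_ball).2 hzk) _

end PaperMeasure

theorem polynomial_multiplication_not_localizing_general {μ : Measure ℂ} [IsFiniteMeasure μ]
    {q : ℝ≥0∞} [Fact (1 ≤ q)] (hball : ∀ᵐ w ∂μ, w ∈ Metric.ball (0 : ℂ) 1)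
    (hsphere : Metric.sphere (0 : ℂ) 1 ⊆ μ.support) {S : Set ℝ} (hS : MeasurableSet S)
    (hS0 : volume S ≠ 0) (hSμ : (volume.restrict S).map Complex.ofReal ≪ μ) :
    ¬ IsLocalizing {X : Lp ℂ q μ →L[ℂ] Lp ℂ q μ |
        ∃ p : Polynomial ℂ, ∀ f : Lp ℂ q μ, ⇑(X f) =ᵐ[μ] fun w => p.eval w * f w} := by
  intro hloc
  obtain ⟨M, hM⟩ := exists_forall_norm_reExpLp_le (μ := μ) (q := q)
  obtain ⟨c, ε, n, X, y, hε, hn, hX, hX1, hy, hlim⟩ :=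
    hloc.exists_tendsto_add_smul fun n => hM (n : ℝ)
  choose p hp using hX
  obtain ⟨ψ, hψ, hae⟩ := exists_subseq_ae_tendsto_mul hp hlim
  obtain ⟨φ, h, hφ, hh, hph⟩ := exists_subseq_tendsto_analyticOnNhd one_pos
    (fun j => (p (ψ j)).differentiable.diffContOnCl) fun j w hw =>
      (norm_le_opNorm_of_mem_support (p (ψ j)).continuous (hp _) (hsphere hw)).trans (hX1 _)
  have hmul : ∀ᵐ w ∂μ, Tendsto (fun j => (p (ψ (φ j))).eval w *
      (c w + ε * (𝐞 (n (ψ (φ j)) * w.re) : ℂ))) atTop (𝓝 (y w)) := by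
    filter_upwards [hae, ae_forall_coeFn_add_smul_reExpLp c ε fun j => (n j : ℝ)] with w hw hcoe
    simp only [hcoe] at hw
    exact hw.comp hφ.tendsto_atTop
  have := nullSingletonClass_map_of_injective (μ := volume.restrict S) Complex.measurable_ofReal
    Complex.ofReal_injective
  rcases eqOn_zero_or_ae_ne_zero hh (convex_ball 0 1).isPreconnected measurableSet_ball
    (hSμ.ae_le hball) with hzero | hne
  · refine hy (Lp.ext ?_)
    filter_upwards [hmul, hball, Lp.coeFn_zero ℂ q μ] with w hw hwball hw0
    have hw_zero := hph w hwball
    rw [hzero hwball] at hw_zero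
    rw [hw0]
    exact eq_zero_of_tendsto_mul_add_mul hw_zero (fun _ => (Circle.norm_coe _).le) hw
  · have hfreq : Tendsto (fun j => (n (ψ (φ j)) : ℝ)) atTop (cocompact ℝ) :=
      (tendsto_natCast_atTop_atTop.comp (hn.comp (hψ.comp hφ)).tendsto_atTop).mono_right
        atTop_le_cocompact
    refine not_ae_exists_tendsto_fourierChar hS hS0 hfreq ?_
    have hofReal := Complex.measurable_ofReal.aemeasurable (μ := volume.restrict S)
    filter_upwards [ae_of_ae_map hofReal (hSμ.ae_le hmul), ae_of_ae_map hofReal (hSμ.ae_le hball),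
      ae_of_ae_map hofReal hne] with t ht htball hht
    exact exists_tendsto_of_tendsto_mul_add_mul (hph t htball) hht hε ht

/-- If the points `z_k` of the open unit disc accumulate at every point of the unit circle
and stay away from `[0,1/2]`, then the algebra `𝓡 = {p(M_z)}` is not localizing
on the Hilbert space `L²(μ)`. -/
theorem polynomial_multiplication_not_localizing
    (z : ℕ → ℂ) (hz : ∀ k, ‖z k‖ < 1)
    (hsphere : Metric.sphere (0 : ℂ) 1 ⊆ closure (Set.range z))
    (hdisj : closure (Set.range z) ∩ (Complex.ofReal '' Set.Icc 0 (1/2)) = ∅) :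
    ¬ IsLocalizing {X : Lp ℂ 2 (paperMeasure z) →L[ℂ] Lp ℂ 2 (paperMeasure z) |
        ∃ p : Polynomial ℂ, ∀ f : Lp ℂ 2 (paperMeasure z),
          ⇑(X f) =ᵐ[paperMeasure z] fun w => p.eval w * f w} := by
  exact polynomial_multiplication_not_localizing_general (ae_mem_ball_paperMeasure hz)
    (hsphere.trans (closure_range_subset_support_paperMeasure z)) measurableSet_Icc (by norm_num)
    (map_ofReal_restrict_absolutelyContinuous_paperMeasure z)
end

section
/- The algebra {M_φ : φ ∈ H∞(𝔻)} of all multiplication operators by bounded analytic functions on the unit disc, acting on the Bergman space A²(𝔻), is not localizing. -/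
open Filter Topology MeasureTheory

/-- The two-dimensional Lebesgue (area) measure on the open unit disc. -/
noncomputable def bergmanMeasure : Measure ℂ := volume.restrict (Metric.ball 0 1)

/-- The Bergman space `A²(𝔻)`: the subspace of `L²(𝔻, dA)` consisting of (classes of)
functions having a holomorphic representative on the open unit disc, with the `L²` norm. -/
noncomputable def BergmanSpace : Submodule ℂ (Lp ℂ 2 bergmanMeasure) where
  carrier := {f | ∃ g : ℂ → ℂ, DifferentiableOn ℂ g (Metric.ball 0 1) ∧
    ⇑f =ᵐ[bergmanMeasure] g}
  add_mem' := by
    rintro f f' ⟨g, hg, hfg⟩ ⟨g', hg', hfg'⟩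
    refine ⟨g + g', hg.add hg', (Lp.coeFn_add f f').trans ?_⟩
    filter_upwards [hfg, hfg'] with x h1 h2
    simp [h1, h2]
  zero_mem' := ⟨0, differentiableOn_const 0, Lp.coeFn_zero ℂ 2 bergmanMeasure⟩
  smul_mem' := by
    rintro c f ⟨g, hg, hfg⟩
    refine ⟨c • g, hg.const_smul c, (Lp.coeFn_smul c f).trans ?_⟩
    filter_upwards [hfg] with x h1
    simp [h1]

/-!
Given a closed ball with centre `c` and radius `r > 0`, take `x_N = c + r e_N`, where
`e_N = √((N + 1) / π) z ^ N` is a unit vector whose mass concentrates near the boundary of the disc.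
Suppose that multiplication operators `M_{φ_j}` of norm at most one satisfy `M_{φ_j} x_{n_j} → y`.
Since evaluation at `w` is an eigenvector of the adjoint of `M_φ` with eigenvalue `φ w`, each `φ_j`
is bounded by one. On the annulus `1 - 1 / (2 (n_j + 1)) < |z| < 1` the functions `y` and `φ_j c`
have asymptotically no `L²` mass, and hence neither has `φ_j e_{n_j}`. But there `|e_{n_j}|²` is
comparable to the reciprocal of the area of the annulus, so by the mean value property the mass of
`φ_j e_{n_j}` bounds a multiple of `|φ_j w|²` for every fixed `w`. Thus `φ_j → 0` pointwise, so
`y w = lim φ_j w * x_{n_j} w = 0` for all `w`.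
-/

open Metric Set
open scoped ENNReal Real

lemma setLIntegral_norm_preimage {F : ℂ → ℝ≥0∞} {s : Set ℝ} (hs : MeasurableSet s)
    (hF : ContinuousOn F (norm ⁻¹' s)) :
    ∫⁻ z in norm ⁻¹' s, F z =
      ∫⁻ r in Ioi 0 ∩ s, .ofReal r * ∫⁻ θ in Ioo (-π) π, F (circleMap 0 r θ) := by
  have polarCoord_symm (p : ℝ × ℝ) : Complex.polarCoord.symm p = circleMap 0 p.1 p.2 := by
    simp [circleMap, Complex.exp_mul_I]
  have indicator_polar : ∀ p ∈ polarCoord.target,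
      ENNReal.ofReal p.1 • (norm ⁻¹' s).indicator F (Complex.polarCoord.symm p) =
        (s ×ˢ univ).indicator (fun q ↦ .ofReal q.1 * F (circleMap 0 q.1 q.2)) p := by
    intro p hp
    have hnorm : ‖circleMap 0 p.1 p.2‖ = p.1 := by
      rw [norm_circleMap_zero, abs_of_pos hp.1]
    by_cases hps : p.1 ∈ s <;> simp [indicator, hps, polarCoord_symm, hnorm]
  have hmeas : AEMeasurable (fun p : ℝ × ℝ ↦ .ofReal p.1 * F (circleMap 0 p.1 p.2))
      ((volume.prod volume).restrict ((Ioi 0 ∩ s) ×ˢ Ioo (-π) π)) := by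
    have hcont : ContinuousOn (fun p : ℝ × ℝ ↦ F (circleMap 0 p.1 p.2))
        ((Ioi 0 ∩ s) ×ˢ Ioo (-π) π) := by
      refine hF.comp (by unfold circleMap; fun_prop) fun p hp ↦ ?_
      simpa [abs_of_pos (show 0 < p.1 from hp.1.1)] using hp.1.2
    exact measurable_fst.ennreal_ofReal.aemeasurable.mul
      (hcont.aemeasurable ((measurableSet_Ioi.inter hs).prod measurableSet_Ioo))
  rw [← lintegral_indicator (measurable_norm hs), ← Complex.lintegral_comp_polarCoord_symm,
    setLIntegral_congr_fun polarCoord.open_target.measurableSet indicator_polar,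
    setLIntegral_indicator (hs.prod .univ), polarCoord_target, prod_inter_prod, univ_inter,
    inter_comm s, Measure.volume_eq_prod, setLIntegral_prod _ hmeas]
  simp only [lintegral_const_mul' _ _ ENNReal.ofReal_ne_top]

section MeanValue

variable {E : Type*} [NormedAddCommGroup E] [NormedSpace ℂ E] [CompleteSpace E] {f : ℂ → E}

lemma ofReal_mul_enorm_le_lintegral_circleMap {c w : ℂ} {R : ℝ}
    (hf : DiffContOnCl ℂ f (ball c R)) (hw : w ∈ ball c R) :
    .ofReal (2 * π * (R - dist w c)) * ‖f w‖ₑ ≤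
      .ofReal R * ∫⁻ θ in Ioo (-π) π, ‖f (circleMap c R θ)‖ₑ := by
  have hR : 0 < R := pos_of_mem_ball hw
  have hgap : 0 < R - dist w c := sub_pos.2 hw
  have hkernel (θ : ℝ) :
      ‖(circleMap c R θ - c) / (circleMap c R θ - w)‖ₑ ≤ .ofReal (R / (R - dist w c)) := by
    have hcircle : dist (circleMap c R θ) c = R := circleMap_mem_sphere c hR.le θ
    have hdist : R - dist w c ≤ ‖circleMap c R θ - w‖ := by
      rw [← dist_eq_norm]
      linarith [dist_triangle (circleMap c R θ) w c]
    rw [← ofReal_norm, norm_div, ← dist_eq_norm _ c, hcircle]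
    gcongr
  have hcauchy : (2 * π) • f w = ∫ θ in Ioo (-π) π,
      ((circleMap c R θ - c) / (circleMap c R θ - w)) • f (circleMap c R θ) := by
    rw [← abs_of_pos hR] at hf hw
    rw [← hf.circleAverage_smul_div hw, Real.circleAverage_eq_integral_add (-π),
      intervalIntegral.integral_comp_add_right
        fun θ ↦ ((circleMap c R θ - c) / (circleMap c R θ - w)) • f (circleMap c R θ),
      smul_inv_smul₀ Real.two_pi_pos.ne', zero_add, two_mul, add_neg_cancel_right,
      intervalIntegral.integral_of_le (by linarith [Real.pi_pos]), integral_Ioc_eq_integral_Ioo]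
  calc .ofReal (2 * π * (R - dist w c)) * ‖f w‖ₑ
      = .ofReal (R - dist w c) * ‖(2 * π) • f w‖ₑ := by
        rw [enorm_smul, mul_comm (2 * π), ENNReal.ofReal_mul hgap.le, mul_assoc,
          Real.enorm_of_nonneg Real.two_pi_pos.le]
    _ ≤ .ofReal (R - dist w c) * ∫⁻ θ in Ioo (-π) π,
          .ofReal (R / (R - dist w c)) * ‖f (circleMap c R θ)‖ₑ := by
        rw [hcauchy]
        gcongr
        refine (enorm_integral_le_lintegral_enorm _).trans (lintegral_mono fun θ ↦ ?_)
        rw [enorm_smul]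
        gcongr
        exact hkernel θ
    _ = .ofReal R * ∫⁻ θ in Ioo (-π) π, ‖f (circleMap c R θ)‖ₑ := by
        rw [lintegral_const_mul' _ _ ENNReal.ofReal_ne_top, ← mul_assoc,
          ← ENNReal.ofReal_mul hgap.le, mul_div_cancel₀ _ hgap.ne']

lemma ofReal_mul_enorm_le_setLIntegral_annulus {w : ℂ} {ρ R : ℝ}
    (hf : DifferentiableOn ℂ f (ball 0 R)) (hw : ‖w‖ ≤ ρ) :
    .ofReal (2 * π * (R - ρ) * (ρ - ‖w‖)) * ‖f w‖ₑ ≤ ∫⁻ z in norm ⁻¹' Ioo ρ R, ‖f z‖ₑ := by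
  have hρ : 0 ≤ ρ := (norm_nonneg w).trans hw
  have hcircle : ∀ r ∈ Ioo ρ R, .ofReal (2 * π * (ρ - ‖w‖)) * ‖f w‖ₑ ≤
      .ofReal r * ∫⁻ θ in Ioo (-π) π, ‖f (circleMap 0 r θ)‖ₑ := by
    intro r hr
    have hfr : DiffContOnCl ℂ f (ball 0 r) :=
      (hf.mono <| closure_ball_subset_closedBall.trans (closedBall_subset_ball hr.2)).diffContOnCl
    refine le_trans ?_ (ofReal_mul_enorm_le_lintegral_circleMap hfr
      (mem_ball_zero_iff.2 (hw.trans_lt hr.1)))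
    rw [dist_zero_right]
    gcongr
    exact hr.1.le
  have hcont : ContinuousOn (fun z ↦ ‖f z‖ₑ) (norm ⁻¹' Ioo ρ R) :=
    continuous_enorm.comp_continuousOn
      (hf.continuousOn.mono fun z hz ↦ mem_ball_zero_iff.2 hz.2)
  rw [setLIntegral_norm_preimage measurableSet_Ioo hcont,
    inter_eq_right.2 (Ioo_subset_Ioi_self.trans (Ioi_subset_Ioi hρ))]
  calc .ofReal (2 * π * (R - ρ) * (ρ - ‖w‖)) * ‖f w‖ₑ
      = ∫⁻ _ in Ioo ρ R, .ofReal (2 * π * (ρ - ‖w‖)) * ‖f w‖ₑ := by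
        have hgap : 0 ≤ 2 * π * (ρ - ‖w‖) := by have := Real.pi_pos; bound
        rw [setLIntegral_const, Real.volume_Ioo, mul_right_comm _ ‖f w‖ₑ, ← ENNReal.ofReal_mul hgap]
        ring_nf
    _ ≤ _ := setLIntegral_mono' measurableSet_Ioo hcircle

end MeanValue

lemma ofReal_mul_enorm_sq_le_setLIntegral_annulus {f : ℂ → ℂ} {w : ℂ} {ρ R : ℝ}
    (hf : DifferentiableOn ℂ f (ball 0 R)) (hw : ‖w‖ ≤ ρ) :
    .ofReal (2 * π * (R - ρ) * (ρ - ‖w‖)) * ‖f w‖ₑ ^ 2 ≤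
      ∫⁻ z in norm ⁻¹' Ioo ρ R, ‖f z‖ₑ ^ 2 := by
  simpa only [Pi.pow_apply, enorm_pow] using ofReal_mul_enorm_le_setLIntegral_annulus (hf.pow 2) hw

section L2

variable {α E : Type*} [MeasurableSpace α] [NormedAddCommGroup E] {μ : Measure α}

lemma eLpNorm_two_sq (f : α → E) : eLpNorm f 2 μ ^ 2 = ∫⁻ x, ‖f x‖ₑ ^ 2 ∂μ := by
  simpa using eLpNorm_nnreal_pow_eq_lintegral (f := f) (μ := μ) (p := 2) two_ne_zero

lemma tendsto_eLpNorm_restrict_zero {ι : Type*} {l : Filter ι} [l.IsCountablyGenerated]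
    {f : α → E} {p : ℝ≥0∞} (hp : p ≠ ∞) (hf : MemLp f p μ) {s : ι → Set α}
    (hs : ∀ i, MeasurableSet (s i)) (hlim : ∀ᵐ x ∂μ, ∀ᶠ i in l, x ∉ s i) :
    Tendsto (fun i ↦ eLpNorm f p (μ.restrict (s i))) l (𝓝 0) := by
  rcases eq_or_ne p 0 with rfl | hp0
  · simp [tendsto_const_nhds]
  have hp_pos : 0 < p.toReal := ENNReal.toReal_pos hp0 hp
  suffices h : Tendsto (fun i ↦ ∫⁻ x in s i, ‖f x‖ₑ ^ p.toReal ∂μ) l (𝓝 0) by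
    simpa [eLpNorm_eq_lintegral_rpow_enorm_toReal hp0 hp, hp_pos] using
      h.ennrpow_const (1 / p.toReal)
  simp_rw [← lintegral_indicator (hs _)]
  rw [← lintegral_zero (μ := μ)]
  have hmeas : AEMeasurable (fun x ↦ ‖f x‖ₑ ^ p.toReal) μ := hf.1.enorm.pow_const _
  refine tendsto_lintegral_filter_of_dominated_convergence' (fun x ↦ ‖f x‖ₑ ^ p.toReal)
    (.of_forall fun i ↦ hmeas.indicator (hs i))
    (.of_forall fun i ↦ .of_forall fun x ↦ indicator_le_self _ _ x)
    (lintegral_rpow_enorm_lt_top_of_eLpNorm_lt_top hp0 hp hf.2).ne ?_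
  filter_upwards [hlim] with x hx
  exact tendsto_const_nhds.congr' (hx.mono fun i hi ↦ (indicator_of_notMem hi _).symm)

end L2

lemma norm_le_opNorm_of_comp_eq_smul {𝕜 E : Type*} [NontriviallyNormedField 𝕜]
    [NormedAddCommGroup E] [NormedSpace 𝕜 E] {T : E →L[𝕜] E} {δ : StrongDual 𝕜 E} (hδ : δ ≠ 0)
    {a : 𝕜} (heigen : δ ∘L T = a • δ) : ‖a‖ ≤ ‖T‖ := by
  refine le_of_mul_le_mul_right ?_ (norm_pos_iff.2 hδ)
  calc ‖a‖ * ‖δ‖ = ‖δ ∘L T‖ := by rw [heigen, norm_smul]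
    _ ≤ ‖T‖ * ‖δ‖ := (δ.opNorm_comp_le T).trans_eq (mul_comm _ _)

namespace BergmanSpace

section Evaluation

/-- The holomorphic function on the disc represented by a class in `A²(𝔻)`. Its values outside the
disc are arbitrary. -/
noncomputable def holomorphicRep (f : BergmanSpace) : ℂ → ℂ := f.2.choose

lemma differentiableOn_holomorphicRep (f : BergmanSpace) :
    DifferentiableOn ℂ (holomorphicRep f) (ball 0 1) := f.2.choose_spec.1

lemma ae_eq_holomorphicRep (f : BergmanSpace) :
    ⇑(f : Lp ℂ 2 bergmanMeasure) =ᵐ[bergmanMeasure] holomorphicRep f := f.2.choose_spec.2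

lemma eqOn_holomorphicRep_of_ae_eq {f : BergmanSpace} {g : ℂ → ℂ} (hg : ContinuousOn g (ball 0 1))
    (hfg : ⇑(f : Lp ℂ 2 bergmanMeasure) =ᵐ[bergmanMeasure] g) :
    EqOn (holomorphicRep f) g (ball 0 1) :=
  Measure.eqOn_open_of_ae_eq ((ae_eq_holomorphicRep f).symm.trans hfg) isOpen_ball
    (differentiableOn_holomorphicRep f).continuousOn hg

lemma exists_norm_holomorphicRep_le {w : ℂ} (hw : w ∈ ball (0 : ℂ) 1) :
    ∃ C, ∀ f : BergmanSpace, ‖holomorphicRep f w‖ ≤ C * ‖f‖ := by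
  have hw1 : ‖w‖ < 1 := mem_ball_zero_iff.1 hw
  obtain ⟨ρ, hwρ, hρ1⟩ := exists_between hw1
  set a : ℝ := 2 * π * (1 - ρ) * (ρ - ‖w‖)
  have ha : 0 < a := mul_pos (mul_pos Real.two_pi_pos (sub_pos.2 hρ1)) (sub_pos.2 hwρ)
  refine ⟨√a⁻¹, fun f ↦ ?_⟩
  have hmass : ENNReal.ofReal a * ‖holomorphicRep f w‖ₑ ^ 2 ≤ ‖f‖ₑ ^ 2 := calc
    _ ≤ ∫⁻ z in norm ⁻¹' Ioo ρ 1, ‖holomorphicRep f z‖ₑ ^ 2 :=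
      ofReal_mul_enorm_sq_le_setLIntegral_annulus (differentiableOn_holomorphicRep f) hwρ.le
    _ ≤ ∫⁻ z, ‖holomorphicRep f z‖ₑ ^ 2 ∂bergmanMeasure :=
      lintegral_mono_set fun z hz ↦ mem_ball_zero_iff.2 hz.2
    _ = ‖f‖ₑ ^ 2 := by
      rw [← eLpNorm_two_sq, ← eLpNorm_congr_ae (ae_eq_holomorphicRep f), ← Lp.enorm_def]
      rfl
  have hsq : ‖holomorphicRep f w‖ ^ 2 ≤ a⁻¹ * ‖f‖ ^ 2 := by
    rw [← ofReal_norm, ← ofReal_norm, ← ENNReal.ofReal_pow (norm_nonneg _),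
      ← ENNReal.ofReal_pow (norm_nonneg _), ← ENNReal.ofReal_mul ha.le,
      ENNReal.ofReal_le_ofReal_iff (by positivity)] at hmass
    rwa [le_inv_mul_iff₀ ha]
  calc ‖holomorphicRep f w‖ ≤ √(a⁻¹ * ‖f‖ ^ 2) := Real.le_sqrt_of_sq_le hsq
    _ = √a⁻¹ * ‖f‖ := by rw [Real.sqrt_mul (by positivity), Real.sqrt_sq (norm_nonneg f)]

/-- Evaluation at a point of the disc, as a bounded linear functional on `A²(𝔻)`. -/
noncomputable def evalCLM (w : ball (0 : ℂ) 1) : BergmanSpace →L[ℂ] ℂ :=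
  LinearMap.mkContinuousOfExistsBound
    { toFun f := holomorphicRep f w
      map_add' f g := by
        refine eqOn_holomorphicRep_of_ae_eq ((differentiableOn_holomorphicRep f).add
          (differentiableOn_holomorphicRep g)).continuousOn ?_ w.2
        exact (Lp.coeFn_add _ _).trans ((ae_eq_holomorphicRep f).add (ae_eq_holomorphicRep g))
      map_smul' a f := by
        refine eqOn_holomorphicRep_of_ae_eq
          ((differentiableOn_holomorphicRep f).const_smul a).continuousOn ?_ w.2
        exact (Lp.coeFn_smul _ _).trans ((ae_eq_holomorphicRep f).const_smul a) }
    (exists_norm_holomorphicRep_le w.2)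

lemma evalCLM_apply (w : ball (0 : ℂ) 1) (f : BergmanSpace) :
    evalCLM w f = holomorphicRep f w := rfl

lemma eq_zero_of_forall_evalCLM_eq_zero {f : BergmanSpace} (hf : ∀ w, evalCLM w f = 0) :
    f = 0 := by
  refine Subtype.ext (Lp.eq_zero_iff_ae_eq_zero.2 ?_)
  filter_upwards [ae_eq_holomorphicRep f, ae_restrict_mem measurableSet_ball] with z hz hz1
  rw [hz, ← evalCLM_apply ⟨z, hz1⟩, hf, Pi.zero_apply]

end Evaluation

section Monomial

lemma setLIntegral_ball_enorm_pow_sq (N : ℕ) :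
    ∫⁻ z in ball (0 : ℂ) 1, ‖z ^ N‖ₑ ^ 2 = .ofReal (π / (N + 1)) := by
  have hball : ball (0 : ℂ) 1 = norm ⁻¹' Iio 1 := by ext; simp
  have hradial : ∫ r in Ioo (0 : ℝ) 1, r ^ (2 * N + 1) = 1 / (2 * N + 2) := by
    rw [← integral_Ioc_eq_integral_Ioo, ← intervalIntegral.integral_of_le zero_le_one, integral_pow]
    norm_num [add_assoc]
  have hcircle : ∀ r ∈ Ioo (0 : ℝ) 1,
      .ofReal r * ∫⁻ θ in Ioo (-π) π, ‖circleMap 0 r θ ^ N‖ₑ ^ 2 =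
        .ofReal (2 * π) * ENNReal.ofReal (r ^ (2 * N + 1)) := by
    intro r hr
    have hr0 : 0 ≤ r := hr.1.le
    simp only [← ofReal_norm, norm_pow, norm_circleMap_zero, abs_of_nonneg hr0]
    rw [setLIntegral_const, Real.volume_Ioo, ← ENNReal.ofReal_pow (by positivity),
      ← ENNReal.ofReal_mul (by positivity), ← ENNReal.ofReal_mul hr0,
      ← ENNReal.ofReal_mul Real.two_pi_pos.le]
    ring_nf
  rw [hball, setLIntegral_norm_preimage measurableSet_Iio (by fun_prop), Ioi_inter_Iio,
    setLIntegral_congr_fun measurableSet_Ioo hcircle,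
    lintegral_const_mul' _ _ ENNReal.ofReal_ne_top, ← ofReal_integral_eq_lintegral_ofReal, hradial,
    ← ENNReal.ofReal_mul Real.two_pi_pos.le]
  · congr 1
    field_simp
  · exact (Continuous.integrableOn_Icc (by fun_prop)).mono_set Ioo_subset_Icc_self
  · filter_upwards [ae_restrict_mem measurableSet_Ioo] with r hr
    exact pow_nonneg hr.1.le _

/-- The orthonormal basis function `z ↦ √((N + 1) / π) z ^ N` of `A²(𝔻)`. -/
noncomputable def unitMonomial (N : ℕ) (z : ℂ) : ℂ := √((N + 1) / π) * z ^ N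

lemma differentiable_unitMonomial (N : ℕ) : Differentiable ℂ (unitMonomial N) := by
  unfold unitMonomial
  fun_prop

lemma enorm_unitMonomial_sq (N : ℕ) (z : ℂ) :
    ‖unitMonomial N z‖ₑ ^ 2 = .ofReal ((N + 1) / π) * ‖z ^ N‖ₑ ^ 2 := by
  have hscale : 0 ≤ ((N : ℝ) + 1) / π := by positivity
  rw [unitMonomial, enorm_mul, mul_pow, ← ofReal_norm, Complex.norm_of_nonneg (Real.sqrt_nonneg _),
    ← ENNReal.ofReal_pow (Real.sqrt_nonneg _), Real.sq_sqrt hscale]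

lemma eLpNorm_unitMonomial (N : ℕ) : eLpNorm (unitMonomial N) 2 bergmanMeasure = 1 := by
  have hsq : eLpNorm (unitMonomial N) 2 bergmanMeasure ^ 2 = 1 := by
    simp only [eLpNorm_two_sq, enorm_unitMonomial_sq]
    rw [lintegral_const_mul' _ _ ENNReal.ofReal_ne_top, bergmanMeasure,
      setLIntegral_ball_enorm_pow_sq, ← ENNReal.ofReal_mul (by positivity),
      div_mul_div_cancel₀ Real.pi_ne_zero, div_self (by positivity), ENNReal.ofReal_one]
  exact (ENNReal.pow_right_strictMono two_ne_zero).injective (hsq.trans (one_pow 2).symm)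

lemma memLp_unitMonomial (N : ℕ) : MemLp (unitMonomial N) 2 bergmanMeasure :=
  ⟨(differentiable_unitMonomial N).continuous.aestronglyMeasurable,
    (eLpNorm_unitMonomial N).trans_lt ENNReal.one_lt_top⟩

/-- `unitMonomial N` as an element of `A²(𝔻)`. -/
noncomputable def unitMonomialL2 (N : ℕ) : BergmanSpace :=
  ⟨(memLp_unitMonomial N).toLp, unitMonomial N, (differentiable_unitMonomial N).differentiableOn,
    (memLp_unitMonomial N).coeFn_toLp⟩

lemma coeFn_unitMonomialL2 (N : ℕ) :
    ⇑(unitMonomialL2 N : Lp ℂ 2 bergmanMeasure) =ᵐ[bergmanMeasure] unitMonomial N :=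
  (memLp_unitMonomial N).coeFn_toLp

lemma norm_unitMonomialL2 (N : ℕ) : ‖unitMonomialL2 N‖ = 1 := by
  change ‖(memLp_unitMonomial N).toLp‖ = 1
  rw [Lp.norm_toLp, eLpNorm_unitMonomial, ENNReal.toReal_one]

lemma evalCLM_ne_zero (w : ball (0 : ℂ) 1) : evalCLM w ≠ 0 := by
  intro h
  have heval : evalCLM w (unitMonomialL2 0) = unitMonomial 0 w := eqOn_holomorphicRep_of_ae_eq
    (differentiable_unitMonomial 0).continuous.continuousOn (coeFn_unitMonomialL2 0) w.2
  have hconst : unitMonomial 0 w ≠ 0 := by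
    simpa [unitMonomial] using (Real.sqrt_pos.2 Real.pi_pos).ne'
  exact hconst (by rw [← heval, h, zero_apply])

end Monomial
section BoundaryCollar

/-- The annulus `1 - 1 / (2 (N + 1)) < |z| < 1`: thin enough that `|z| ^ N ≥ 1 / 2` on it, yet
carrying a fixed proportion of the mass of `unitMonomial N`. -/
def boundaryCollar (N : ℕ) : Set ℂ := norm ⁻¹' Ioo (1 - 1 / (2 * (N + 1))) 1

lemma measurableSet_boundaryCollar (N : ℕ) : MeasurableSet (boundaryCollar N) :=
  measurable_norm measurableSet_Ioo

lemma bergmanMeasure_restrict_boundaryCollar (N : ℕ) :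
    bergmanMeasure.restrict (boundaryCollar N) = volume.restrict (boundaryCollar N) :=
  Measure.restrict_restrict_of_subset fun _ hz ↦ mem_ball_zero_iff.2 hz.2

lemma tendsto_boundaryCollar_innerRadius :
    Tendsto (fun N : ℕ ↦ (1 : ℝ) - 1 / (2 * (N + 1))) atTop (𝓝 1) := by
  have h := (tendsto_one_div_add_atTop_nhds_zero_nat (𝕜 := ℝ)).div_const 2
  simpa [div_eq_mul_inv, mul_comm] using h.const_sub 1

lemma eventually_notMem_boundaryCollar (z : ℂ) : ∀ᶠ N in atTop, z ∉ boundaryCollar N := by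
  rcases lt_or_ge ‖z‖ 1 with hz | hz
  · filter_upwards [tendsto_boundaryCollar_innerRadius.eventually_const_lt hz] with N hN hmem
    exact hN.not_gt hmem.1
  · exact .of_forall fun N hmem ↦ hz.not_gt hmem.2

lemma half_le_norm_pow_of_mem_boundaryCollar {N : ℕ} {z : ℂ} (hz : z ∈ boundaryCollar N) :
    1 / 2 ≤ ‖z ^ N‖ := by
  have hwidth : 1 / (2 * ((N : ℝ) + 1)) ≤ 1 := by
    rw [div_le_one (by positivity)]
    linarith [N.cast_nonneg (α := ℝ)]
  have hdepth : (N : ℝ) * (1 / (2 * (N + 1))) ≤ 1 / 2 := by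
    rw [mul_one_div, div_le_div_iff₀ (by positivity) two_pos]
    linarith
  calc (1 : ℝ) / 2 ≤ 1 + N * (-(1 / (2 * (N + 1)))) := by linarith
    _ ≤ (1 + -(1 / (2 * (N + 1)))) ^ N := one_add_mul_le_pow (by linarith) N
    _ ≤ ‖z‖ ^ N := pow_le_pow_left₀ (by linarith) (by linarith [hz.1]) N
    _ = ‖z ^ N‖ := (norm_pow z N).symm

lemma ofReal_le_enorm_unitMonomial_sq {N : ℕ} {z : ℂ} (hz : z ∈ boundaryCollar N) :
    .ofReal ((N + 1) / (4 * π)) ≤ ‖unitMonomial N z‖ₑ ^ 2 := by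
  have hpow : (1 / 2) ^ 2 ≤ ‖z ^ N‖ ^ 2 :=
    pow_le_pow_left₀ (by norm_num) (half_le_norm_pow_of_mem_boundaryCollar hz) 2
  rw [enorm_unitMonomial_sq, ← ofReal_norm, ← ENNReal.ofReal_pow (norm_nonneg _),
    ← ENNReal.ofReal_mul (by positivity)]
  refine ENNReal.ofReal_le_ofReal ?_
  calc ((N : ℝ) + 1) / (4 * π) = (N + 1) / π * (1 / 2) ^ 2 := by ring
    _ ≤ (N + 1) / π * ‖z ^ N‖ ^ 2 := by gcongr

lemma ofReal_mul_enorm_sq_le_eLpNorm_mul_unitMonomial_sq {φ : ℂ → ℂ}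
    (hφ : DifferentiableOn ℂ φ (ball 0 1)) {w : ℂ} {N : ℕ} (hw : ‖w‖ ≤ 1 - 1 / (2 * (N + 1))) :
    .ofReal ((1 - 1 / (2 * (N + 1)) - ‖w‖) / 4) * ‖φ w‖ₑ ^ 2 ≤
      eLpNorm (φ * unitMonomial N) 2 (bergmanMeasure.restrict (boundaryCollar N)) ^ 2 := by
  set ρ : ℝ := 1 - 1 / (2 * (N + 1)) with hρ
  have hscale : 0 ≤ ((N : ℝ) + 1) / (4 * π) := by positivity
  calc .ofReal ((ρ - ‖w‖) / 4) * ‖φ w‖ₑ ^ 2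
      = .ofReal ((N + 1) / (4 * π)) * (.ofReal (2 * π * (1 - ρ) * (ρ - ‖w‖)) * ‖φ w‖ₑ ^ 2) := by
        rw [← mul_assoc, ← ENNReal.ofReal_mul hscale]
        congr 2
        have hwidth : 1 - ρ = 1 / (2 * (N + 1)) := by rw [hρ, sub_sub_cancel]
        rw [hwidth]
        field_simp
    _ ≤ .ofReal ((N + 1) / (4 * π)) * ∫⁻ z in boundaryCollar N, ‖φ z‖ₑ ^ 2 := by
        gcongr
        exact ofReal_mul_enorm_sq_le_setLIntegral_annulus hφ hw
    _ = ∫⁻ z in boundaryCollar N, .ofReal ((N + 1) / (4 * π)) * ‖φ z‖ₑ ^ 2 :=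
        (lintegral_const_mul' _ _ ENNReal.ofReal_ne_top).symm
    _ ≤ ∫⁻ z in boundaryCollar N, ‖(φ * unitMonomial N) z‖ₑ ^ 2 := by
        refine setLIntegral_mono' (measurableSet_boundaryCollar N) fun z hz ↦ ?_
        rw [Pi.mul_apply, enorm_mul, mul_pow, mul_comm]
        gcongr
        exact ofReal_le_enorm_unitMonomial_sq hz
    _ = _ := by rw [eLpNorm_two_sq, bergmanMeasure_restrict_boundaryCollar]

lemma tendsto_zero_of_tendsto_eLpNorm_boundaryCollar {ι : Type*} {l : Filter ι} {φ : ι → ℂ → ℂ}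
    (hφ : ∀ j, DifferentiableOn ℂ (φ j) (ball 0 1)) {n : ι → ℕ} (hn : Tendsto n l atTop)
    (hlim : Tendsto (fun j ↦ eLpNorm (φ j * unitMonomial (n j)) 2
      (bergmanMeasure.restrict (boundaryCollar (n j)))) l (𝓝 0))
    {w : ℂ} (hw : w ∈ ball (0 : ℂ) 1) : Tendsto (fun j ↦ φ j w) l (𝓝 0) := by
  obtain ⟨ρ, hwρ, hρ1⟩ := exists_between (mem_ball_zero_iff.1 hw)
  set κ : ℝ≥0∞ := .ofReal ((ρ - ‖w‖) / 4)
  have hκ : κ ≠ 0 := by simpa [κ] using hwρ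
  have hbound : ∀ᶠ j in l, ‖φ j w‖ₑ ^ 2 ≤ κ⁻¹ * eLpNorm (φ j * unitMonomial (n j)) 2
      (bergmanMeasure.restrict (boundaryCollar (n j))) ^ 2 := by
    filter_upwards [hn.eventually (tendsto_boundaryCollar_innerRadius.eventually_const_le hρ1)]
      with j hj
    rw [← ENNReal.mul_le_iff_le_inv hκ ENNReal.ofReal_ne_top]
    refine le_trans ?_ (ofReal_mul_enorm_sq_le_eLpNorm_mul_unitMonomial_sq (hφ j)
      (hwρ.le.trans hj))
    unfold κ
    gcongr
  have hsq : Tendsto (fun j ↦ ‖φ j w‖ₑ ^ 2) l (𝓝 0) := by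
    refine tendsto_of_tendsto_of_tendsto_of_le_of_le' tendsto_const_nhds ?_
      (.of_forall fun _ ↦ zero_le) hbound
    simpa using ENNReal.Tendsto.const_mul
      (ENNReal.Tendsto.pow (n := 2) hlim) (.inr (ENNReal.inv_ne_top.2 hκ))
  rw [tendsto_zero_iff_enorm_tendsto_zero]
  simpa [← ENNReal.rpow_natCast_mul] using hsq.ennrpow_const (1 / 2)

end BoundaryCollar

section Multiplication

/-- `X` is the multiplication operator `M_φ` on `A²(𝔻)` with holomorphic symbol `φ`. Boundedness of
`φ` is not a field because it follows from that of `X`: see `IsMultiplicationBy.norm_le_opNorm`. -/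
structure IsMultiplicationBy (φ : ℂ → ℂ) (X : BergmanSpace →L[ℂ] BergmanSpace) : Prop where
  differentiableOn : DifferentiableOn ℂ φ (ball 0 1)
  apply_ae_eq (f : BergmanSpace) : ⇑(X f : Lp ℂ 2 bergmanMeasure) =ᵐ[bergmanMeasure]
    φ * ⇑(f : Lp ℂ 2 bergmanMeasure)

namespace IsMultiplicationBy

variable {φ : ℂ → ℂ} {X : BergmanSpace →L[ℂ] BergmanSpace}

lemma evalCLM_apply_eq (hX : IsMultiplicationBy φ X) (w : ball (0 : ℂ) 1) (f : BergmanSpace) :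
    evalCLM w (X f) = φ w * evalCLM w f :=
  eqOn_holomorphicRep_of_ae_eq
    (hX.differentiableOn.mul (differentiableOn_holomorphicRep f)).continuousOn
    ((hX.apply_ae_eq f).trans (EventuallyEq.rfl.mul (ae_eq_holomorphicRep f))) w.2

lemma norm_le_opNorm (hX : IsMultiplicationBy φ X) {w : ℂ} (hw : w ∈ ball (0 : ℂ) 1) :
    ‖φ w‖ ≤ ‖X‖ :=
  norm_le_opNorm_of_comp_eq_smul (evalCLM_ne_zero ⟨w, hw⟩)
    (ContinuousLinearMap.ext (hX.evalCLM_apply_eq ⟨w, hw⟩))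

lemma eLpNorm_restrict_apply_le (hX : IsMultiplicationBy φ X) (A : Set ℂ) (f : BergmanSpace) :
    eLpNorm (X f : Lp ℂ 2 bergmanMeasure) 2 (bergmanMeasure.restrict A) ≤
      .ofReal ‖X‖ * eLpNorm (f : Lp ℂ 2 bergmanMeasure) 2 (bergmanMeasure.restrict A) := by
  refine eLpNorm_le_mul_eLpNorm_of_ae_le_mul (ae_restrict_of_ae ?_) 2
  filter_upwards [hX.apply_ae_eq f, ae_restrict_mem measurableSet_ball] with z hz hz1
  rw [hz, Pi.mul_apply, norm_mul]
  gcongr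
  exact hX.norm_le_opNorm hz1

lemma eLpNorm_restrict_apply_le_add (hX : IsMultiplicationBy φ X) (hX1 : ‖X‖ ≤ 1) (A : Set ℂ)
    (f g y : BergmanSpace) :
    eLpNorm (X g : Lp ℂ 2 bergmanMeasure) 2 (bergmanMeasure.restrict A) ≤
      ‖X (f + g) - y‖ₑ + eLpNorm (y : Lp ℂ 2 bergmanMeasure) 2 (bergmanMeasure.restrict A) +
        eLpNorm (f : Lp ℂ 2 bergmanMeasure) 2 (bergmanMeasure.restrict A) := by
  set μA := bergmanMeasure.restrict A
  have hmeas (h : BergmanSpace) : AEStronglyMeasurable (h : Lp ℂ 2 bergmanMeasure) μA :=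
    (Lp.aestronglyMeasurable _).restrict
  have hsplit : ⇑(X g : Lp ℂ 2 bergmanMeasure) =ᵐ[μA]
      ⇑(X (f + g) - y : BergmanSpace).1 + ⇑y.1 - ⇑(X f).1 := by
    have hsum : (X g).1 = (X (f + g) - y).1 + y.1 - (X f).1 := by simp
    refine ae_restrict_of_ae ?_
    rw [hsum]
    exact (Lp.coeFn_sub _ _).trans ((Lp.coeFn_add _ _).sub .rfl)
  have hXf : eLpNorm (X f).1 2 μA ≤ eLpNorm f.1 2 μA :=
    (hX.eLpNorm_restrict_apply_le A f).trans
      (mul_le_of_le_one_left zero_le (ENNReal.ofReal_le_one.2 hX1))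
  rw [eLpNorm_congr_ae hsplit]
  calc eLpNorm (⇑(X (f + g) - y).1 + ⇑y.1 - ⇑(X f).1) 2 μA
      ≤ eLpNorm (X (f + g) - y).1 2 μA + eLpNorm y.1 2 μA + eLpNorm (X f).1 2 μA :=
        (eLpNorm_sub_le ((hmeas _).add (hmeas _)) (hmeas _) one_le_two).trans
          (by gcongr; exact eLpNorm_add_le (hmeas _) (hmeas _) one_le_two)
    _ ≤ ‖X (f + g) - y‖ₑ + eLpNorm y.1 2 μA + eLpNorm f.1 2 μA := by
        gcongr
        exact (eLpNorm_mono_measure _ Measure.restrict_le_self).trans_eq (Lp.enorm_def _).symm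

end IsMultiplicationBy

section Sequences

variable {ι : Type*} {l : Filter ι} {φ : ι → ℂ → ℂ} {X : ι → BergmanSpace →L[ℂ] BergmanSpace}

lemma tendsto_eLpNorm_restrict_apply_zero [l.IsCountablyGenerated]
    (hX : ∀ j, IsMultiplicationBy (φ j) (X j)) (hX1 : ∀ j, ‖X j‖ ≤ 1) {c y : BergmanSpace}
    {g : ι → BergmanSpace} (hlim : Tendsto (fun j ↦ X j (c + g j)) l (𝓝 y))
    {A : ι → Set ℂ} (hA : ∀ j, MeasurableSet (A j)) (hA0 : ∀ z, ∀ᶠ j in l, z ∉ A j) :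
    Tendsto (fun j ↦ eLpNorm (X j (g j) : Lp ℂ 2 bergmanMeasure) 2
      (bergmanMeasure.restrict (A j))) l (𝓝 0) := by
  have hvanish (f : BergmanSpace) : Tendsto (fun j ↦ eLpNorm (f : Lp ℂ 2 bergmanMeasure) 2
      (bergmanMeasure.restrict (A j))) l (𝓝 0) :=
    tendsto_eLpNorm_restrict_zero ENNReal.ofNat_ne_top (Lp.memLp _) hA (.of_forall hA0)
  have herror : Tendsto (fun j ↦ ‖X j (c + g j) - y‖ₑ) l (𝓝 0) :=
    tendsto_zero_iff_enorm_tendsto_zero.1 (tendsto_sub_nhds_zero_iff.2 hlim)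
  refine tendsto_of_tendsto_of_tendsto_of_le_of_le tendsto_const_nhds
    (by simpa using (herror.add (hvanish y)).add (hvanish c)) (fun _ ↦ zero_le)
    fun j ↦ (hX j).eLpNorm_restrict_apply_le_add (hX1 j) (A j) c (g j) y

lemma tendsto_symbol_zero [l.IsCountablyGenerated]
    (hX : ∀ j, IsMultiplicationBy (φ j) (X j)) (hX1 : ∀ j, ‖X j‖ ≤ 1) {c y : BergmanSpace}
    {a : ℂ} (ha : a ≠ 0) {n : ι → ℕ} (hn : Tendsto n l atTop)
    (hlim : Tendsto (fun j ↦ X j (c + a • unitMonomialL2 (n j))) l (𝓝 y))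
    {w : ℂ} (hw : w ∈ ball (0 : ℂ) 1) : Tendsto (fun j ↦ φ j w) l (𝓝 0) := by
  have hmass := tendsto_eLpNorm_restrict_apply_zero hX hX1 hlim
    (fun j ↦ measurableSet_boundaryCollar (n j))
    fun z ↦ hn.eventually (eventually_notMem_boundaryCollar z)
  have hsymbol (j : ι) : ⇑(X j (a • unitMonomialL2 (n j)) : Lp ℂ 2 bergmanMeasure)
      =ᵐ[bergmanMeasure] (a • φ j) * unitMonomial (n j) := by
    filter_upwards [(hX j).apply_ae_eq (a • unitMonomialL2 (n j)),
      Lp.coeFn_smul a (unitMonomialL2 (n j)).1, coeFn_unitMonomialL2 (n j)] with z hXz hsmul hmon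
    rw [hXz, Pi.mul_apply, Submodule.coe_smul, hsmul, Pi.smul_apply, hmon, Pi.mul_apply,
      Pi.smul_apply, smul_eq_mul, smul_eq_mul]
    ring
  have hscaled : Tendsto (fun j ↦ (a • φ j) w) l (𝓝 0) := by
    refine tendsto_zero_of_tendsto_eLpNorm_boundaryCollar
      (fun j ↦ (hX j).differentiableOn.const_smul a) hn (hmass.congr fun j ↦ ?_) hw
    exact eLpNorm_congr_ae (ae_restrict_of_ae (hsymbol j))
  simpa [ha] using hscaled.const_mul a⁻¹

lemma eq_zero_of_tendsto_symbol_zero [l.NeBot] (hX : ∀ j, IsMultiplicationBy (φ j) (X j))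
    (hφ : ∀ w ∈ ball (0 : ℂ) 1, Tendsto (fun j ↦ φ j w) l (𝓝 0)) {x : ι → BergmanSpace}
    (hx : IsBoundedUnder (· ≤ ·) l fun j ↦ ‖x j‖) {y : BergmanSpace}
    (hlim : Tendsto (fun j ↦ X j (x j)) l (𝓝 y)) : y = 0 := by
  refine eq_zero_of_forall_evalCLM_eq_zero fun w ↦ ?_
  have hbdd : IsBoundedUnder (· ≤ ·) l fun j ↦ ‖evalCLM w (x j)‖ := by
    obtain ⟨B, hB⟩ := hx.eventually_le
    exact isBoundedUnder_of_eventually_le (hB.mono fun j ↦ (evalCLM w).le_opNorm_of_le)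
  have hzero : Tendsto (fun j ↦ evalCLM w (X j (x j))) l (𝓝 0) := by
    simpa only [(hX _).evalCLM_apply_eq] using (hφ w w.2).zero_mul_isBoundedUnder_le hbdd
  exact tendsto_nhds_unique (((evalCLM w).continuous.tendsto y).comp hlim) hzero

end Sequences

end Multiplication

end BergmanSpace

/-- The algebra of multiplication operators by bounded analytic functions on the unit
disc is not localizing on the Bergman space `A²(𝔻)`. -/
theorem bergman_Hinfty_not_localizing :
    ¬ IsLocalizing {X : BergmanSpace →L[ℂ] BergmanSpace |
        ∃ φ : ℂ → ℂ, DifferentiableOn ℂ φ (Metric.ball 0 1) ∧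
          (∃ C : ℝ, ∀ w ∈ Metric.ball (0 : ℂ) 1, ‖φ w‖ ≤ C) ∧
          ∀ f : BergmanSpace, ⇑(X f : Lp ℂ 2 bergmanMeasure) =ᵐ[bergmanMeasure]
            fun w => φ w * (f : Lp ℂ 2 bergmanMeasure) w} := by
  rintro ⟨c, r, hr, -, hball⟩
  let x (N : ℕ) : BergmanSpace := c + (r : ℂ) • BergmanSpace.unitMonomialL2 N
  have hx (N : ℕ) : x N ∈ closedBall c r := by
    rw [mem_closedBall_iff_norm, add_sub_cancel_left, norm_smul, BergmanSpace.norm_unitMonomialL2,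
      mul_one, Complex.norm_of_nonneg hr.le]
  obtain ⟨n, X, y, hn, hmult, hX1, hy, hlim⟩ := hball x hx
  choose φ hφ _ hXφ using hmult
  have hX (j : ℕ) : BergmanSpace.IsMultiplicationBy (φ j) (X j) := ⟨hφ j, hXφ j⟩
  have hφ0 : ∀ w ∈ ball (0 : ℂ) 1, Tendsto (fun j ↦ φ j w) atTop (𝓝 0) := fun w hw ↦
    BergmanSpace.tendsto_symbol_zero hX hX1 (Complex.ofReal_ne_zero.2 hr.ne') hn.tendsto_atTop
      hlim hw
  have hbdd : IsBoundedUnder (· ≤ ·) atTop fun j ↦ ‖x (n j)‖ :=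
    isBoundedUnder_of ⟨‖c‖ + r, fun j ↦ norm_le_of_mem_closedBall (hx (n j))⟩
  exact hy (BergmanSpace.eq_zero_of_tendsto_symbol_zero hX hφ0 hbdd hlim)
end

section
/- The algebra {M_φ : φ ∈ H∞(𝔻)} of all multiplication operators by bounded analytic functions on the unit disc, acting on the Hardy space H²(𝔻), is not localizing. -/
open Filter Topology

/-- The Hardy space `H²(𝔻)`, realized as the space of square-summable coefficient
sequences `(a_n)` of holomorphic functions `z ↦ ∑ a_n zⁿ` on the unit disc. -/
noncomputable abbrev HardySpace := lp (fun _ : ℕ => ℂ) 2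

/-- The holomorphic function on the unit disc attached to an element of `H²(𝔻)`. -/
noncomputable def HardySpace.toFun (a : HardySpace) : ℂ → ℂ :=
  fun z => ∑' n : ℕ, a n * z ^ n

/-!
The multiplication operators commute with the shift `S`, an isometry whose adjoint powers tend
strongly to `0`. For `0 < a < 1` the Möbius transforms `W n = (S ^ n - a) (1 - a S ^ n)⁻¹` are
isometries in the closed algebra generated by `S`, and `(W n)† → -a` strongly. Hence the vectors
`x n = -a⁻¹ • W n c` satisfy `‖x n - c‖² → (a⁻² - 1) ‖c‖²`, which is small for `a` close to `1`.
If `X n` commutes with `S` and `X n (x n) = W n (g n)` converges to `y`, then applying `(W n)†`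
gives `g n → -a • y`, while `‖g n‖ = ‖W n (g n)‖ → ‖y‖`; thus `‖y‖ = a ‖y‖` and `y = 0`.
-/

open ContinuousLinearMap ComplexConjugate
open scoped InnerProductSpace Ring

theorem commute_ringInverse_right {M₀ : Type*} [MonoidWithZero M₀] {x y : M₀}
    (h : Commute x y) : Commute x y⁻¹ʳ := by
  by_cases hy : IsUnit y
  · obtain ⟨u, rfl⟩ := hy
    rw [Ring.inverse_unit]
    exact h.units_inv_right
  · rw [Ring.inverse_non_unit y hy]
    exact Commute.zero_right x

theorem exists_inv_sq_sub_one_mul_lt (t : ℝ) {ε : ℝ} (hε : 0 < ε) :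
    ∃ a : ℝ, 0 < a ∧ a < 1 ∧ ((a ^ 2)⁻¹ - 1) * t < ε := by
  have hcont : ContinuousAt (fun a : ℝ => ((a ^ 2)⁻¹ - 1) * t) 1 := by
    fun_prop (disch := norm_num)
  have hsmall : ∀ᶠ a in 𝓝[<] (1 : ℝ), ((a ^ 2)⁻¹ - 1) * t < ε :=
    nhdsWithin_le_nhds (hcont.eventually_lt_const (by simpa using hε))
  obtain ⟨a, hlt, ha⟩ := (hsmall.and (Ioo_mem_nhdsLT one_pos)).exists
  exact ⟨a, ha.1, ha.2, hlt⟩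

section Algebra

variable {𝕜 A : Type*} [CommRing 𝕜] [StarRing 𝕜] [Ring A] [Algebra 𝕜 A]

/-- The Möbius transform `(V - a) (1 - conj a V)⁻¹` of an algebra element `V`. For `‖a‖ < 1` it
turns a Hilbert space isometry `V` into another isometry commuting with everything that commutes
with `V`. `Ring.inverse` returns the junk value `0` when `1 - conj a V` is not invertible. -/
noncomputable def mobiusTransform (a : 𝕜) (V : A) : A :=
  (V - a • 1) * (1 - conj a • V)⁻¹ʳ

theorem commute_mobiusTransform {X V : A} (h : Commute X V) (a : 𝕜) :
    Commute X (mobiusTransform a V) := by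
  have hnum : Commute X (V - a • 1) := h.sub_right ((Commute.one_right X).smul_right a)
  have hden : Commute X (1 - conj a • V) := (Commute.one_right X).sub_right (h.smul_right _)
  exact hnum.mul_right (commute_ringInverse_right hden)

theorem mobiusTransform_add_smul_one {a : 𝕜} {V : A} (hunit : IsUnit (1 - conj a • V)) :
    mobiusTransform a V + a • 1 = (1 - a * conj a) • (V * (1 - conj a • V)⁻¹ʳ) := by
  calc mobiusTransform a V + a • 1
      = (V - a • 1) * (1 - conj a • V)⁻¹ʳ
          + a • ((1 - conj a • V) * (1 - conj a • V)⁻¹ʳ) := by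
        rw [Ring.mul_inverse_cancel _ hunit, mobiusTransform]
    _ = ((V - a • 1) + a • (1 - conj a • V)) * (1 - conj a • V)⁻¹ʳ := by
        rw [add_mul, smul_mul_assoc]
    _ = (1 - a * conj a) • (V * (1 - conj a • V)⁻¹ʳ) := by
        rw [← smul_mul_assoc]
        congr 1
        module

end Algebra

section NormedSpace

variable {𝕜 E : Type*} [NontriviallyNormedField 𝕜] [NormedAddCommGroup E] [NormedSpace 𝕜 E]

theorem opNorm_le_one_of_isometry {V : E →L[𝕜] E} (hV : Isometry V) : ‖V‖ ≤ 1 := by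
  simpa using opNorm_le_of_lipschitz hV.lipschitz

theorem isometry_pow {V : E →L[𝕜] E} (hV : Isometry V) (n : ℕ) : Isometry (V ^ n) := by
  induction n with
  | zero => exact isometry_id
  | succ n ih => exact pow_succ V n ▸ ih.comp hV

theorem norm_inverse_one_sub_le [CompleteSpace E] {T : E →L[𝕜] E} (hT : ‖T‖ < 1) :
    ‖(1 - T)⁻¹ʳ‖ ≤ (1 - ‖T‖)⁻¹ := by
  refine opNorm_le_bound _ (inv_nonneg.2 (sub_nonneg.2 hT.le)) fun x => ?_
  set u := (1 - T)⁻¹ʳ x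
  have hu : u - T u = x :=
    DFunLike.congr_fun (Ring.mul_inverse_cancel _ (isUnit_one_sub_of_norm_lt_one hT)) x
  rw [inv_mul_eq_div, le_div_iff₀ (sub_pos.2 hT)]
  calc ‖u‖ * (1 - ‖T‖) = ‖u‖ - ‖T‖ * ‖u‖ := by ring
    _ ≤ ‖u‖ - ‖T u‖ := by gcongr; exact T.le_opNorm u
    _ ≤ ‖u - T u‖ := norm_sub_norm_le _ _
    _ = ‖x‖ := by rw [hu]

end NormedSpace

section Hilbert

variable {𝕜 E : Type*} [RCLike 𝕜] [NormedAddCommGroup E] [InnerProductSpace 𝕜 E]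
  {V : E →L[𝕜] E} {a : 𝕜}

theorem norm_conj_smul_le (hV : ‖V‖ ≤ 1) : ‖conj a • V‖ ≤ ‖a‖ := by
  rw [norm_smul, RCLike.norm_conj]
  exact mul_le_of_le_one_right (norm_nonneg a) hV

theorem norm_apply_sub_smul_eq_norm_sub_conj_smul_apply (hV : Isometry V) (a : 𝕜) (u : E) :
    ‖V u - a • u‖ = ‖u - conj a • V u‖ := by
  have hVu : ‖V u‖ = ‖u‖ := hV.norm_map_of_map_zero (map_zero V) u
  have hinner : RCLike.re ⟪V u, a • u⟫_𝕜 = RCLike.re ⟪u, conj a • V u⟫_𝕜 := by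
    rw [← inner_re_symm, inner_smul_left, inner_smul_right]
  refine (sq_eq_sq₀ (norm_nonneg _) (norm_nonneg _)).1 ?_
  rw [@norm_sub_sq 𝕜, @norm_sub_sq 𝕜, hinner, norm_smul, norm_smul, RCLike.norm_conj, hVu]

variable [CompleteSpace E]

theorem isUnit_one_sub_conj_smul (hV : ‖V‖ ≤ 1) (ha : ‖a‖ < 1) : IsUnit (1 - conj a • V) :=
  isUnit_one_sub_of_norm_lt_one ((norm_conj_smul_le hV).trans_lt ha)

theorem isometry_mobiusTransform (hV : Isometry V) (ha : ‖a‖ < 1) :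
    Isometry (mobiusTransform a V : E →L[𝕜] E) := by
  refine AddMonoidHomClass.isometry_of_norm _ fun x => ?_
  have hunit := isUnit_one_sub_conj_smul (opNorm_le_one_of_isometry hV) ha
  calc ‖mobiusTransform a V x‖ = ‖((1 - conj a • V) * (1 - conj a • V)⁻¹ʳ) x‖ :=
        norm_apply_sub_smul_eq_norm_sub_conj_smul_apply hV a _
    _ = ‖x‖ := by rw [Ring.mul_inverse_cancel _ hunit, one_apply_eq_self]

theorem norm_adjoint_mobiusTransform_add_smul_le (hV : ‖V‖ ≤ 1) (ha : ‖a‖ < 1) (y : E) :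
    ‖adjoint (mobiusTransform a V) y + conj a • y‖ ≤ (1 + ‖a‖) * ‖adjoint V y‖ := by
  set R := (1 - conj a • V)⁻¹ʳ
  have hadjoint : adjoint (mobiusTransform a V) y + conj a • y
      = conj (1 - a * conj a) • adjoint R (adjoint V y) := by
    have h := congrArg (fun T : E →L[𝕜] E => star T y)
      (mobiusTransform_add_smul_one (isUnit_one_sub_conj_smul hV ha))
    simpa [← star_eq_adjoint] using h
  have ha_sub : 0 < 1 - ‖a‖ := sub_pos.2 ha
  have hR : ‖adjoint R‖ ≤ (1 - ‖a‖)⁻¹ := by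
    rw [LinearIsometryEquiv.norm_map]
    refine (norm_inverse_one_sub_le ((norm_conj_smul_le hV).trans_lt ha)).trans ?_
    gcongr
    exact norm_conj_smul_le hV
  have hcoeff : ‖conj (1 - a * conj a)‖ = (1 - ‖a‖) * (1 + ‖a‖) := by
    rw [RCLike.norm_conj, RCLike.mul_conj]
    norm_cast
    rw [abs_of_nonneg (by nlinarith [norm_nonneg a])]
    ring
  calc ‖adjoint (mobiusTransform a V) y + conj a • y‖
      = (1 - ‖a‖) * (1 + ‖a‖) * ‖adjoint R (adjoint V y)‖ := by rw [hadjoint, norm_smul, hcoeff]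
    _ ≤ (1 - ‖a‖) * (1 + ‖a‖) * ((1 - ‖a‖)⁻¹ * ‖adjoint V y‖) := by
        gcongr
        exact le_of_opNorm_le _ hR _
    _ = (1 + ‖a‖) * ‖adjoint V y‖ := by field_simp

theorem tendsto_adjoint_mobiusTransform_pow {S : E →L[𝕜] E} (hS : Isometry S) (ha : ‖a‖ < 1)
    {y : E} (hy : Tendsto (fun n => (adjoint S ^ n) y) atTop (𝓝 0)) :
    Tendsto (fun n => adjoint (mobiusTransform a (S ^ n)) y) atTop (𝓝 (-conj a • y)) := by
  rw [tendsto_iff_norm_sub_tendsto_zero]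
  have hbound : Tendsto (fun n => (1 + ‖a‖) * ‖(adjoint S ^ n) y‖) atTop (𝓝 0) := by
    simpa using hy.norm.const_mul (1 + ‖a‖)
  refine squeeze_zero (fun _ => norm_nonneg _) (fun n => ?_) hbound
  have hpow : adjoint S ^ n = adjoint (S ^ n) := (star_pow S n).symm
  rw [neg_smul, sub_neg_eq_add, hpow]
  exact norm_adjoint_mobiusTransform_add_smul_le
    (opNorm_le_one_of_isometry (isometry_pow hS n)) ha y

section IsometryFamily

variable {ι : Type*} {l : Filter ι} {W : ι → E →L[𝕜] E} {μ : 𝕜}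

theorem tendsto_norm_conj_inv_smul_apply_sub_sq (hW : ∀ i, Isometry (W i)) (hμ : μ ≠ 0) {c : E}
    (hc : Tendsto (fun i => adjoint (W i) c) l (𝓝 (μ • c))) :
    Tendsto (fun i => ‖(conj μ)⁻¹ • W i c - c‖ ^ 2) l (𝓝 (((‖μ‖ ^ 2)⁻¹ - 1) * ‖c‖ ^ 2)) := by
  have hexpand : ∀ i, ‖(conj μ)⁻¹ • W i c - c‖ ^ 2
      = (‖μ‖ ^ 2)⁻¹ * ‖c‖ ^ 2 - 2 * RCLike.re (μ⁻¹ * ⟪c, adjoint (W i) c⟫_𝕜) + ‖c‖ ^ 2 := by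
    intro i
    rw [@norm_sub_sq 𝕜, norm_smul, (hW i).norm_map_of_map_zero (map_zero _), inner_smul_left,
      adjoint_inner_right, mul_pow, norm_inv, RCLike.norm_conj, inv_pow, map_inv₀,
      RCLike.conj_conj]
  have hinner : Tendsto (fun i => μ⁻¹ * ⟪c, adjoint (W i) c⟫_𝕜) l (𝓝 ((‖c‖ : 𝕜) ^ 2)) := by
    have h := ((tendsto_const_nhds (x := c)).inner hc).const_mul μ⁻¹
    rwa [inner_smul_right, inner_self_eq_norm_sq_to_K, inv_mul_cancel_left₀ hμ] at h
  have hre : Tendsto (fun i => RCLike.re (μ⁻¹ * ⟪c, adjoint (W i) c⟫_𝕜)) l (𝓝 (‖c‖ ^ 2)) := by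
    have h := (RCLike.continuous_re.tendsto _).comp hinner
    rwa [← RCLike.ofReal_pow, RCLike.ofReal_re] at h
  simp only [hexpand]
  convert ((hre.const_mul 2).const_sub _).add_const _ using 2
  ring

theorem eq_zero_of_tendsto_apply_of_tendsto_adjoint [l.NeBot] (hW : ∀ i, Isometry (W i))
    (hμ : ‖μ‖ < 1) {g : ι → E} {y : E} (hy : Tendsto (fun i => adjoint (W i) y) l (𝓝 (μ • y)))
    (hg : Tendsto (fun i => W i (g i)) l (𝓝 y)) : y = 0 := by
  have hcancel : ∀ i, adjoint (W i) (W i (g i)) = g i := fun i =>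
    DFunLike.congr_fun ((isometry_iff_adjoint_comp_self _).1 (hW i)) (g i)
  have hdiff : Tendsto (fun i => g i - adjoint (W i) y) l (𝓝 0) := by
    refine squeeze_zero_norm (fun i => ?_) (tendsto_iff_norm_sub_tendsto_zero.1 hg)
    calc ‖g i - adjoint (W i) y‖ = ‖adjoint (W i) (W i (g i) - y)‖ := by rw [map_sub, hcancel]
      _ ≤ 1 * ‖W i (g i) - y‖ := le_of_opNorm_le _
          ((LinearIsometryEquiv.norm_map _ _).trans_le (opNorm_le_one_of_isometry (hW i))) _
      _ = ‖W i (g i) - y‖ := one_mul _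
  have hlim : Tendsto g l (𝓝 (μ • y)) := by simpa using hdiff.add hy
  have hnorm : ‖y‖ = ‖μ‖ * ‖y‖ := by
    rw [← norm_smul]
    refine tendsto_nhds_unique hg.norm (hlim.norm.congr fun i => ?_)
    exact ((hW i).norm_map_of_map_zero (map_zero _) (g i)).symm
  exact norm_eq_zero.1 (by nlinarith [norm_nonneg y])

end IsometryFamily

theorem exists_seq_mem_closedBall_forall_commute_limit_eq_zero {S : E →L[𝕜] E} (hS : Isometry S)
    (hpure : ∀ y, Tendsto (fun n => (adjoint S ^ n) y) atTop (𝓝 0)) (c : E) {r : ℝ} (hr : 0 < r) :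
    ∃ x : ℕ → E, (∀ n, x n ∈ Metric.closedBall c r) ∧
      ∀ (n : ℕ → ℕ) (X : ℕ → E →L[𝕜] E) (y : E), Tendsto n atTop atTop →
        (∀ j, Commute (X j) S) → Tendsto (fun j => X j (x (n j))) atTop (𝓝 y) → y = 0 := by
  obtain ⟨a, ha_pos, ha_lt, ha_ball⟩ := exists_inv_sq_sub_one_mul_lt (‖c‖ ^ 2) (pow_pos hr 2)
  have hnorm : ‖(a : 𝕜)‖ = a := by rw [RCLike.norm_ofReal, abs_of_pos ha_pos]
  set μ : 𝕜 := -conj (a : 𝕜) with hμ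
  have hμ_norm : ‖μ‖ = a := by rw [hμ, norm_neg, RCLike.norm_conj, hnorm]
  have hμ_ne : μ ≠ 0 := norm_pos_iff.1 (hμ_norm ▸ ha_pos)
  set W : ℕ → E →L[𝕜] E := fun n => mobiusTransform (a : 𝕜) (S ^ n)
  have hW : ∀ n, Isometry (W n) := fun n =>
    isometry_mobiusTransform (isometry_pow hS n) (hnorm.trans_lt ha_lt)
  have hW_adjoint : ∀ y, Tendsto (fun n => adjoint (W n) y) atTop (𝓝 (μ • y)) := fun y =>
    tendsto_adjoint_mobiusTransform_pow hS (hnorm.trans_lt ha_lt) (hpure y)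
  have hball : ∀ᶠ n in atTop, ‖(conj μ)⁻¹ • W n c - c‖ ^ 2 < r ^ 2 :=
    (tendsto_norm_conj_inv_smul_apply_sub_sq hW hμ_ne (hW_adjoint c)).eventually_lt_const
      (hμ_norm ▸ ha_ball)
  obtain ⟨N, hN⟩ := eventually_atTop.1 hball
  refine ⟨fun n => (conj μ)⁻¹ • W (n + N) c, fun n => ?_, fun n X y hn hX hy => ?_⟩
  · rw [mem_closedBall_iff_norm]
    exact (lt_of_pow_lt_pow_left₀ 2 hr.le (hN _ le_add_self)).le
  · have hcomm : ∀ j, X j ((conj μ)⁻¹ • W (n j + N) c)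
        = W (n j + N) (X j ((conj μ)⁻¹ • c)) := fun j => by
      rw [← (W (n j + N)).map_smul]
      exact DFunLike.congr_fun (commute_mobiusTransform ((hX j).pow_right _) _) _
    exact eq_zero_of_tendsto_apply_of_tendsto_adjoint (fun j => hW (n j + N))
      (hμ_norm.trans_lt ha_lt) ((hW_adjoint y).comp ((tendsto_add_atTop_nat N).comp hn))
      (hy.congr hcomm)

end Hilbert

namespace HardySpace

theorem norm_sq_eq_tsum (f : HardySpace) : ‖f‖ ^ 2 = ∑' m, ‖f m‖ ^ 2 := by
  simpa using lp.norm_rpow_eq_tsum (p := 2) (by norm_num) f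

theorem summable_norm_sq (f : HardySpace) : Summable fun m => ‖f m‖ ^ 2 := by
  simpa using (lp.memℓp f).summable (by norm_num)

/-- The unilateral shift `(a₀, a₁, …) ↦ (0, a₀, a₁, …)`, i.e. multiplication by the coordinate
function `z` in terms of coefficients. -/
noncomputable def shift : HardySpace →ₗᵢ[ℂ] HardySpace where
  toFun f := ⟨fun m => m.casesOn 0 f, by
    change Memℓp _ 2
    rw [memℓp_gen_iff (by norm_num), ← summable_nat_add_iff 1]
    exact (lp.memℓp f).summable (by norm_num)⟩
  map_add' f g := by
    ext (_ | m)
    · exact (add_zero 0).symm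
    · rfl
  map_smul' b f := by
    ext (_ | m)
    · exact (mul_zero b).symm
    · rfl
  norm_map' f := by
    refine (sq_eq_sq₀ (norm_nonneg _) (norm_nonneg _)).1 ?_
    rw [norm_sq_eq_tsum, norm_sq_eq_tsum, (summable_norm_sq _).tsum_eq_zero_add]
    simp

theorem shift_apply_zero (f : HardySpace) : shift f 0 = 0 := rfl

theorem shift_apply_succ (f : HardySpace) (m : ℕ) : shift f (m + 1) = f m := rfl

theorem shift_single (m : ℕ) (b : ℂ) : shift (lp.single 2 m b) = lp.single 2 (m + 1) b := by
  ext (_ | k)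
  · rw [shift_apply_zero, lp.single_apply_ne _ _ _ m.succ_ne_zero.symm]
  · simp [shift_apply_succ, Pi.single_apply]

theorem adjoint_shift_apply (f : HardySpace) (m : ℕ) :
    (adjoint shift.toContinuousLinearMap f) m = f (m + 1) := by
  have h := adjoint_inner_right shift.toContinuousLinearMap (lp.single 2 m (1 : ℂ)) f
  simpa [shift_single, lp.inner_single_left] using h

theorem adjoint_shift_pow_apply (n : ℕ) (f : HardySpace) (m : ℕ) :
    ((adjoint shift.toContinuousLinearMap ^ n) f) m = f (m + n) := by
  induction n generalizing m with
  | zero => rfl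
  | succ n ih =>
    rw [pow_succ', mul_apply_eq_comp, adjoint_shift_apply, ih, add_right_comm, add_assoc]

theorem tendsto_adjoint_shift_pow (f : HardySpace) :
    Tendsto (fun n => (adjoint shift.toContinuousLinearMap ^ n) f) atTop (𝓝 0) := by
  have hsq : Tendsto (fun n => ‖(adjoint shift.toContinuousLinearMap ^ n) f‖ ^ 2) atTop (𝓝 0) := by
    simpa only [norm_sq_eq_tsum, adjoint_shift_pow_apply] using
      tendsto_sum_nat_add fun m => ‖f m‖ ^ 2
  rw [tendsto_zero_iff_norm_tendsto_zero]
  simpa using hsq.sqrt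

theorem one_le_radius_ofScalars (f : HardySpace) :
    1 ≤ (FormalMultilinearSeries.ofScalars ℂ f).radius := by
  refine FormalMultilinearSeries.le_radius_of_bound _ (r := 1) ‖f‖ fun m => ?_
  rw [FormalMultilinearSeries.ofScalars_norm, NNReal.coe_one, one_pow, mul_one]
  exact lp.norm_apply_le_norm two_ne_zero f m

theorem hasFPowerSeriesAt_toFun (f : HardySpace) :
    HasFPowerSeriesAt (toFun f) (FormalMultilinearSeries.ofScalars ℂ f) 0 := by
  have hsum : toFun f = (FormalMultilinearSeries.ofScalars ℂ f).sum := by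
    ext w
    simp [toFun, FormalMultilinearSeries.sum, mul_comm]
  exact hsum ▸ (FormalMultilinearSeries.hasFPowerSeriesOnBall _
    (one_pos.trans_le (one_le_radius_ofScalars f))).hasFPowerSeriesAt

theorem ext_of_eventuallyEq_toFun {f g : HardySpace} (h : toFun f =ᶠ[𝓝 0] toFun g) : f = g := by
  have hseries := ((hasFPowerSeriesAt_toFun f).congr h).eq_formalMultilinearSeries
    (hasFPowerSeriesAt_toFun g)
  exact lp.ext (FormalMultilinearSeries.ofScalars_series_injective ℂ ℂ hseries)

theorem summable_coeff_mul_pow (f : HardySpace) {w : ℂ} (hw : ‖w‖ < 1) :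
    Summable fun m => f m * w ^ m := by
  refine .of_norm_bounded ((summable_geometric_of_lt_one (norm_nonneg w) hw).mul_left ‖f‖) ?_
  intro m
  rw [norm_mul, norm_pow]
  gcongr
  exact lp.norm_apply_le_norm two_ne_zero f m

theorem toFun_shift (f : HardySpace) {w : ℂ} (hw : ‖w‖ < 1) :
    toFun (shift f) w = w * toFun f w := by
  simp only [toFun, ← tsum_mul_left]
  rw [(summable_coeff_mul_pow _ hw).tsum_eq_zero_add, shift_apply_zero, zero_mul, zero_add]
  refine tsum_congr fun m => ?_
  rw [shift_apply_succ]
  ring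

theorem commute_shift_of_toFun_apply_eq_mul {X : HardySpace →L[ℂ] HardySpace} {φ : ℂ → ℂ}
    (hX : ∀ (f : HardySpace) (w : ℂ), w ∈ Metric.ball (0 : ℂ) 1 →
      toFun (X f) w = φ w * toFun f w) :
    Commute X shift.toContinuousLinearMap := by
  ext1 f
  change X (shift f) = shift (X f)
  refine ext_of_eventuallyEq_toFun ?_
  filter_upwards [Metric.ball_mem_nhds (0 : ℂ) one_pos] with w hw
  have hw_norm : ‖w‖ < 1 := mem_ball_zero_iff.1 hw
  rw [hX _ _ hw, toFun_shift _ hw_norm, toFun_shift _ hw_norm, hX _ _ hw, mul_left_comm]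

end HardySpace

theorem hardy_Hinfty_not_localizing_general {E : Type*} [NormedAddCommGroup E]
    [InnerProductSpace ℂ E] [CompleteSpace E] {S : E →L[ℂ] E} (hS : Isometry S)
    (hpure : ∀ y, Tendsto (fun n => (adjoint S ^ n) y) atTop (𝓝 0)) {𝒳 : Set (E →L[ℂ] E)}
    (h𝒳 : ∀ X ∈ 𝒳, Commute X S) : ¬ IsLocalizing 𝒳 := by
  rintro ⟨c, r, hr, -, hloc⟩
  obtain ⟨x, hx, hlim⟩ := exists_seq_mem_closedBall_forall_commute_limit_eq_zero hS hpure c hr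
  obtain ⟨n, X, y, hn, hX, -, hy, hXy⟩ := hloc x hx
  exact hy (hlim n X y hn.tendsto_atTop (fun j => h𝒳 _ (hX j)) hXy)

/-- The algebra of multiplication operators by bounded analytic functions on the unit
disc is not localizing on the Hardy space `H²(𝔻)`. -/
theorem hardy_Hinfty_not_localizing :
    ¬ IsLocalizing {X : HardySpace →L[ℂ] HardySpace |
        ∃ φ : ℂ → ℂ, DifferentiableOn ℂ φ (Metric.ball 0 1) ∧
          (∃ C : ℝ, ∀ w ∈ Metric.ball (0 : ℂ) 1, ‖φ w‖ ≤ C) ∧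
          ∀ (f : HardySpace) (w : ℂ), w ∈ Metric.ball (0 : ℂ) 1 →
            HardySpace.toFun (X f) w = φ w * HardySpace.toFun f w} :=
  hardy_Hinfty_not_localizing_general (S := HardySpace.shift.toContinuousLinearMap)
    HardySpace.shift.isometry HardySpace.tendsto_adjoint_shift_pow fun _ ⟨_, _, _, hX⟩ =>
      HardySpace.commute_shift_of_toFun_apply_eq_mul hX
end

section
/- Let μ be the normalized Haar measure on the torus 𝕋 = {z ∈ ℂ : |z| = 1}. For any pair of measurable sets A, B ⊆ 𝕋, one has lim_{n→∞} μ(A ∩ {z ∈ 𝕋 : z^n ∈ B}) = μ(A) μ(B). -/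
open Filter Topology MeasureTheory

noncomputable instance : MeasurableSpace Circle := borel Circle
instance : BorelSpace Circle := ⟨rfl⟩

/-!
Let `G` be a divisible compact abelian group whose characters separate points. By Stone–Weierstrass
the characters span a dense subspace of `L²(G)`, and they are orthonormal. The Koopman operator of
`x ↦ x ^ n` sends the character `ψ` to `ψ ^ n`, so `⟪χ, ψ ^ n⟫` vanishes for all but at most one
`n` unless `ψ = 1`, because the dual of a divisible group is torsion-free. Hence
`⟪χ, ψ ^ n⟫ → ⟪χ, 1⟫ * ⟪1, ψ⟫`. Koopman operators are isometries, so this convergence passes from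
characters to all of `L²`, in particular to the indicator functions of `A` and `B`.
-/

section WeakConvergence

variable {ι 𝕜 E F : Type*} {l : Filter ι}

theorem tendsto_apply_of_dense_span [NontriviallyNormedField 𝕜]
    [SeminormedAddCommGroup E] [NormedSpace 𝕜 E] [SeminormedAddCommGroup F] [NormedSpace 𝕜 F]
    {φ : ι → E →L[𝕜] F} {φ₀ : E →L[𝕜] F} {C : ℝ} (hC : ∀ i, ‖φ i‖ ≤ C)
    {S : Set E} (hS : Dense (Submodule.span 𝕜 S : Set E))
    (h : ∀ x ∈ S, Tendsto (fun i => φ i x) l (𝓝 (φ₀ x))) (x : E) :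
    Tendsto (fun i => φ i x) l (𝓝 (φ₀ x)) := by
  have equicontinuous : Equicontinuous ((↑) ∘ φ : ι → E → F) :=
    ((NormedSpace.equicontinuous_TFAE φ).out 5 1 :).1 ⟨C, hC⟩
  have closed := equicontinuous.isClosed_setOfPred_tendsto (l := l) φ₀.continuous
  refine closed.closure_subset_iff.2 (fun y hy => ?_) (hS x)
  induction hy using Submodule.span_induction with
  | mem y hy => exact h y hy
  | zero => simpa using tendsto_const_nhds
  | add y z _ _ hy hz => simpa using hy.add hz
  | smul a y _ hy => simpa using hy.const_smul a

theorem tendsto_inner_apply_of_dense_span [RCLike 𝕜]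
    [SeminormedAddCommGroup E] [InnerProductSpace 𝕜 E]
    {U : ι → E →L[𝕜] E} {U₀ : E →L[𝕜] E} {C : ℝ} (hC : ∀ i, ‖U i‖ ≤ C)
    {S : Set E} (hS : Dense (Submodule.span 𝕜 S : Set E))
    (h : ∀ x ∈ S, ∀ y ∈ S, Tendsto (fun i => inner 𝕜 x (U i y)) l (𝓝 (inner 𝕜 x (U₀ y))))
    (x y : E) : Tendsto (fun i => inner 𝕜 x (U i y)) l (𝓝 (inner 𝕜 x (U₀ y))) := by
  have tendsto_of_mem (x) (hx : x ∈ S) (y) :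
      Tendsto (fun i => inner 𝕜 x (U i y)) l (𝓝 (inner 𝕜 x (U₀ y))) := by
    refine tendsto_apply_of_dense_span (φ := fun i => innerSL 𝕜 x ∘L U i)
      (φ₀ := innerSL 𝕜 x ∘L U₀) (C := ‖x‖ * C) (fun i => ?_) hS (h x hx) y
    calc ‖innerSL 𝕜 x ∘L U i‖ ≤ ‖innerSL 𝕜 x‖ * ‖U i‖ := ContinuousLinearMap.opNorm_comp_le _ _
      _ ≤ ‖x‖ * C := by rw [innerSL_apply_norm]; gcongr; exact hC i
  have tendsto_symm : Tendsto (fun i => inner 𝕜 (U i y) x) l (𝓝 (inner 𝕜 (U₀ y) x)) := by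
    refine tendsto_apply_of_dense_span (φ := fun i => innerSL 𝕜 (U i y))
      (φ₀ := innerSL 𝕜 (U₀ y)) (C := C * ‖y‖) (fun i => ?_) hS (fun x hx => ?_) x
    · rw [innerSL_apply_norm]
      exact (U i).le_of_opNorm_le (hC i) y
    · simpa [Function.comp_def] using
        (RCLike.continuous_conj.tendsto _).comp (tendsto_of_mem x hx y)
  simpa [Function.comp_def] using (RCLike.continuous_conj.tendsto _).comp tendsto_symm

end WeakConvergence

section Mixing

variable {ι X : Type*} {l : Filter ι} [MeasurableSpace X] {μ : Measure X} [IsFiniteMeasure μ]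

theorem tendsto_inner_compMeasurePreserving_of_dense_span {𝕜 : Type*} [RCLike 𝕜] {T : ι → X → X}
    (hT : ∀ i, MeasurePreserving (T i) μ μ) {S : Set (Lp 𝕜 2 μ)}
    (hS : Dense (Submodule.span 𝕜 S : Set (Lp 𝕜 2 μ)))
    (h : ∀ f ∈ S, ∀ g ∈ S, Tendsto (fun i => inner 𝕜 f (Lp.compMeasurePreserving (T i) (hT i) g)) l
      (𝓝 (inner 𝕜 f (Lp.const 2 μ 1) * inner 𝕜 (Lp.const 2 μ 1) g)))
    (f g : Lp 𝕜 2 μ) :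
    Tendsto (fun i => inner 𝕜 f (Lp.compMeasurePreserving (T i) (hT i) g)) l
      (𝓝 (inner 𝕜 f (Lp.const 2 μ 1) * inner 𝕜 (Lp.const 2 μ 1) g)) := by
  let U (i : ι) : Lp 𝕜 2 μ →L[𝕜] Lp 𝕜 2 μ :=
    (Lp.compMeasurePreservingₗᵢ 𝕜 (T i) (hT i)).toContinuousLinearMap
  let P : Lp 𝕜 2 μ →L[𝕜] Lp 𝕜 2 μ :=
    InnerProductSpace.rankOne 𝕜 (Lp.const 2 μ 1) (Lp.const 2 μ 1)
  have inner_P (f g) :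
      inner 𝕜 f (P g) = inner 𝕜 f (Lp.const 2 μ 1) * inner 𝕜 (Lp.const 2 μ 1) g := by
    simp [P, inner_smul_right, mul_comm]
  simp only [← inner_P] at h ⊢
  exact tendsto_inner_apply_of_dense_span (U := U)
    (fun i => LinearIsometry.norm_toContinuousLinearMap_le _) hS h f g

theorem tendsto_measure_inter_preimage_of_tendsto_inner (𝕜 : Type*) [RCLike 𝕜] {T : ι → X → X}
    (hT : ∀ i, MeasurePreserving (T i) μ μ)
    (h : ∀ f g : Lp 𝕜 2 μ, Tendsto (fun i => inner 𝕜 f (Lp.compMeasurePreserving (T i) (hT i) g)) l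
      (𝓝 (inner 𝕜 f (Lp.const 2 μ 1) * inner 𝕜 (Lp.const 2 μ 1) g)))
    (A : Set X) {B : Set X} (hB : MeasurableSet B) :
    Tendsto (fun i => μ (A ∩ T i ⁻¹' B)) l (𝓝 (μ A * μ B)) := by
  have tendsto_of_measurableSet {A : Set X} (hA : MeasurableSet A) :
      Tendsto (fun i => μ (A ∩ T i ⁻¹' B)) l (𝓝 (μ A * μ B)) := by
    have tendsto_inner := h (indicatorConstLp 2 hA (measure_ne_top μ A) 1)
      (indicatorConstLp 2 hB (measure_ne_top μ B) 1)
    simp only [← indicatorConstLp_univ, Lp.indicatorConstLp_compMeasurePreserving,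
      L2.inner_indicatorConstLp_one_indicatorConstLp_one, Set.inter_univ, Set.univ_inter,
      ← RCLike.ofReal_mul] at tendsto_inner
    have tendsto_real := (RCLike.continuous_re.tendsto _).comp tendsto_inner
    simp only [Function.comp_def, RCLike.ofReal_re, measureReal_def,
      ← ENNReal.toReal_mul] at tendsto_real
    exact (ENNReal.tendsto_toReal_iff (by finiteness) (by finiteness)).1 tendsto_real
  simpa only [measure_toMeasurable, Measure.measure_toMeasurable_inter ((hT _).measurable hB)
    (measure_ne_top μ A)] using tendsto_of_measurableSet (measurableSet_toMeasurable μ A)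

end Mixing

section Characters

variable {M : Type*} [Monoid M] [TopologicalSpace M]

/-- The inclusion of the characters of `M` into the complex-valued continuous functions on `M`,
as a homomorphism to the multiplicative monoid of `C(M, ℂ)`: its range is then closed under
products, as needed to apply Stone–Weierstrass to its span. -/
noncomputable def characterMap : PontryaginDual M →* C(M, ℂ) where
  toFun χ := ⟨fun x => χ x, by fun_prop⟩
  map_one' := rfl
  map_mul' _ _ := rfl

@[simp]
theorem characterMap_apply (χ : PontryaginDual M) (x : M) : characterMap χ x = χ x := rfl

theorem star_characterMap (χ : PontryaginDual M) : star (characterMap χ) = characterMap χ⁻¹ := by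
  ext x
  exact (Circle.coe_inv_eq_conj (χ x)).symm

theorem toSubmodule_adjoin_range_characterMap :
    (StarAlgebra.adjoin ℂ (Set.range (characterMap (M := M)))).toSubalgebra.toSubmodule =
      Submodule.span ℂ (Set.range characterMap) := by
  have star_range : star (Set.range (characterMap (M := M))) ⊆ Set.range characterMap := by
    rintro f ⟨χ, hχ⟩
    exact ⟨χ⁻¹, by rw [← star_characterMap, hχ, star_star]⟩
  rw [StarAlgebra.adjoin_eq_span, Set.union_eq_left.2 star_range, ← MonoidHom.coe_mrange,
    Submonoid.closure_eq]

theorem isMulTorsionFree_pontryaginDual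
    (hdiv : ∀ n : ℕ, n ≠ 0 → Function.Surjective (fun x : M => x ^ n)) :
    IsMulTorsionFree (PontryaginDual M) where
  pow_left_injective n hn χ ψ h := by
    refine PontryaginDual.ext fun x => ?_
    obtain ⟨y, rfl⟩ := hdiv n hn x
    rw [map_pow, map_pow]
    calc χ y ^ n = (χ ^ n) y := (ContinuousMonoidHom.pow_apply χ n y).symm
      _ = (ψ ^ n) y := DFunLike.congr_fun h y
      _ = ψ y ^ n := ContinuousMonoidHom.pow_apply ψ n y

variable {G : Type*} [Group G] [TopologicalSpace G]

theorem dense_span_range_characterMap [CompactSpace G]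
    (hsep : ∀ x : G, x ≠ 1 → ∃ χ : PontryaginDual G, χ x ≠ 1) :
    Dense (Submodule.span ℂ (Set.range (characterMap (M := G))) : Set C(G, ℂ)) := by
  have separatesPoints :
      (StarAlgebra.adjoin ℂ (Set.range (characterMap (M := G)))).SeparatesPoints := by
    intro x y hxy
    obtain ⟨χ, hχ⟩ := hsep (x / y) (div_ne_one.2 hxy)
    refine ⟨_, ⟨characterMap χ, StarAlgebra.subset_adjoin ℂ _ ⟨χ, rfl⟩, rfl⟩, ?_⟩
    simpa [div_eq_one, Circle.coe_inj] using hχ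
  have closure_eq_top :=
    ContinuousMap.starSubalgebra_topologicalClosure_eq_top_of_separatesPoints _ separatesPoints
  rw [← toSubmodule_adjoin_range_characterMap]
  exact dense_iff_closure_eq.2 (congrArg SetLike.coe closure_eq_top)

variable [MeasurableSpace G] [BorelSpace G] {μ : Measure G}

theorem integral_character_eq_zero [ContinuousMul G] [μ.IsMulLeftInvariant]
    {χ : PontryaginDual G} (hχ : χ ≠ 1) : ∫ x, (χ x : ℂ) ∂μ = 0 := by
  obtain ⟨a, ha⟩ : ∃ a, χ a ≠ 1 := by
    contrapose! hχ
    exact PontryaginDual.ext hχ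
  have invariance : (χ a : ℂ) * ∫ x, (χ x : ℂ) ∂μ = ∫ x, (χ x : ℂ) ∂μ := by
    rw [← integral_const_mul, ← integral_mul_left_eq_self (fun x => (χ x : ℂ)) a]
    simp
  contrapose! ha
  exact Circle.ext (by simpa [ha] using invariance)

variable [CompactSpace G]

variable (μ) in
/-- The class of a character of `G` in `L²(μ)`; an abbreviation, so that lemmas about
`ContinuousMap.toLp` apply to it. -/
noncomputable abbrev characterLp [IsFiniteMeasure μ] (χ : PontryaginDual G) : Lp ℂ 2 μ :=
  ContinuousMap.toLp 2 μ ℂ (characterMap χ)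

theorem characterLp_one [IsFiniteMeasure μ] :
    characterLp μ (1 : PontryaginDual G) = Lp.const 2 μ 1 := by
  rfl

theorem dense_span_range_characterLp [NormalSpace G] [IsFiniteMeasure μ] [μ.WeaklyRegular]
    (hsep : ∀ x : G, x ≠ 1 → ∃ χ : PontryaginDual G, χ x ≠ 1) :
    Dense (Submodule.span ℂ (Set.range (characterLp (G := G) μ)) : Set (Lp ℂ 2 μ)) := by
  have dense_image :=
    (ContinuousMap.toLp_denseRange (p := 2) ℂ μ ℂ ENNReal.ofNat_ne_top).dense_image
      (ContinuousMap.toLp 2 μ ℂ).continuous (dense_span_range_characterMap hsep)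
  rwa [← ContinuousLinearMap.coe_coe, ← Submodule.map_coe, Submodule.map_span, ← Set.range_comp]
    at dense_image

theorem orthonormal_characterLp [ContinuousMul G] [IsProbabilityMeasure μ]
    [μ.IsMulLeftInvariant] : Orthonormal ℂ (characterLp (G := G) μ) := by
  classical
  have inner_eq_integral (χ ψ : PontryaginDual G) :
      inner ℂ (characterLp μ χ) (characterLp μ ψ) = ∫ x, ((ψ * χ⁻¹) x : ℂ) ∂μ := by
    rw [ContinuousMap.inner_toLp]
    refine integral_congr_ae (.of_forall fun x => ?_)
    exact congrArg ((ψ x : ℂ) * ·) (Circle.coe_inv_eq_conj (χ x)).symm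
  refine orthonormal_iff_ite.2 fun χ ψ => ?_
  rw [inner_eq_integral]
  split_ifs with h
  · simp [h]
  · exact integral_character_eq_zero (by rwa [Ne, mul_inv_eq_one, eq_comm])

theorem compMeasurePreserving_characterLp [IsFiniteMeasure μ] {T : G →ₜ* G}
    (hT : MeasurePreserving T μ μ) (χ : PontryaginDual G) :
    Lp.compMeasurePreserving T hT (characterLp μ χ) = characterLp μ (PontryaginDual.map T χ) :=
  rfl

theorem tendsto_inner_characterLp [ContinuousMul G] [IsProbabilityMeasure μ]
    [μ.IsMulLeftInvariant] {ι : Type*} {l : Filter ι} {T : ι → G →ₜ* G}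
    (hT : ∀ ψ : PontryaginDual G, ψ ≠ 1 →
      Tendsto (fun i => PontryaginDual.map (T i) ψ) l cofinite) (χ ψ : PontryaginDual G) :
    Tendsto (fun i => inner ℂ (characterLp μ χ) (characterLp μ (PontryaginDual.map (T i) ψ))) l
      (𝓝 (inner ℂ (characterLp μ χ) (characterLp μ 1) *
        inner ℂ (characterLp μ 1) (characterLp μ ψ))) := by
  have orthonormal := orthonormal_characterLp (G := G) (μ := μ)
  by_cases hψ : ψ = 1
  · subst hψ
    simpa [orthonormal.1] using tendsto_const_nhds
  · rw [orthonormal.2 (Ne.symm hψ), mul_zero]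
    refine tendsto_const_nhds.congr' ?_
    filter_upwards [(hT ψ hψ).eventually (eventually_cofinite_ne χ)] with i hi
    exact (orthonormal.2 hi.symm).symm

theorem tendsto_haar_measure_inter_preimage_of_tendsto_dual_cofinite [IsTopologicalGroup G]
    [IsProbabilityMeasure μ] [μ.IsHaarMeasure] [μ.WeaklyRegular]
    (hsep : ∀ x : G, x ≠ 1 → ∃ χ : PontryaginDual G, χ x ≠ 1)
    {ι : Type*} {l : Filter ι} {T : ι → G →ₜ* G} (hsurj : ∀ i, Function.Surjective (T i))
    (hT : ∀ ψ : PontryaginDual G, ψ ≠ 1 →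
      Tendsto (fun i => PontryaginDual.map (T i) ψ) l cofinite)
    (A : Set G) {B : Set G} (hB : MeasurableSet B) :
    Tendsto (fun i => μ (A ∩ T i ⁻¹' B)) l (𝓝 (μ A * μ B)) := by
  have measurePreserving (i) : MeasurePreserving (T i) μ μ :=
    (T i).toMonoidHom.measurePreserving (map_continuous (T i)) (hsurj i) rfl
  refine tendsto_measure_inter_preimage_of_tendsto_inner ℂ measurePreserving
    (tendsto_inner_compMeasurePreserving_of_dense_span measurePreserving
      (dense_span_range_characterLp hsep) ?_) A hB
  rintro _ ⟨χ, rfl⟩ _ ⟨ψ, rfl⟩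
  simp only [compMeasurePreserving_characterLp, ← characterLp_one]
  exact tendsto_inner_characterLp hT χ ψ

end Characters

section PowerMaps

variable {M : Type*} [CommMonoid M] [TopologicalSpace M] [ContinuousMul M]

theorem pontryaginDual_map_id_pow (n : ℕ) (ψ : PontryaginDual M) :
    PontryaginDual.map (ContinuousMonoidHom.id M ^ n) ψ = ψ ^ n :=
  PontryaginDual.ext fun x =>
    calc ψ ((ContinuousMonoidHom.id M ^ n) x) = ψ (x ^ n) :=
          congrArg ψ (ContinuousMonoidHom.pow_apply _ n x)
      _ = ψ x ^ n := map_pow ψ x n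
      _ = (ψ ^ n) x := (ContinuousMonoidHom.pow_apply ψ n x).symm

theorem tendsto_pontryaginDual_map_id_pow_cofinite
    (hdiv : ∀ n : ℕ, n ≠ 0 → Function.Surjective (fun x : M => x ^ n))
    {ψ : PontryaginDual M} (hψ : ψ ≠ 1) :
    Tendsto (fun n : ℕ => PontryaginDual.map (ContinuousMonoidHom.id M ^ n) ψ) atTop cofinite := by
  have := isMulTorsionFree_pontryaginDual hdiv
  have pow_injective : Function.Injective (fun n : ℕ => ψ ^ n) :=
    injective_pow_iff_not_isOfFinOrder.2 (not_isOfFinOrder_of_isMulTorsionFree hψ)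
  simpa only [pontryaginDual_map_id_pow, Nat.cofinite_eq_atTop] using pow_injective.tendsto_cofinite

theorem haar_measure_inter_pow_preimage_tendsto_general {G : Type*} [CommGroup G]
    [TopologicalSpace G] [IsTopologicalGroup G] [CompactSpace G] [MeasurableSpace G] [BorelSpace G]
    (hsep : ∀ x : G, x ≠ 1 → ∃ χ : PontryaginDual G, χ x ≠ 1)
    (hdiv : ∀ n : ℕ, n ≠ 0 → Function.Surjective (fun x : G => x ^ n))
    (μ : Measure G) [μ.IsHaarMeasure] [IsProbabilityMeasure μ] [μ.WeaklyRegular]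
    (A : Set G) {B : Set G} (hB : MeasurableSet B) :
    Tendsto (fun n : ℕ => μ (A ∩ {x : G | x ^ n ∈ B})) atTop (𝓝 (μ A * μ B)) := by
  have coe_id_pow (n : ℕ) : ⇑(ContinuousMonoidHom.id G ^ n) = fun x => x ^ n :=
    funext (ContinuousMonoidHom.pow_apply _ n)
  -- The power map of exponent `0` need not be surjective.
  rw [← tendsto_add_atTop_iff_nat 1]
  have tendsto_preimage := tendsto_haar_measure_inter_preimage_of_tendsto_dual_cofinite (μ := μ)
    hsep (T := fun n => ContinuousMonoidHom.id G ^ (n + 1))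
    (fun n => by simpa only [coe_id_pow] using hdiv (n + 1) n.succ_ne_zero)
    (fun ψ hψ => (tendsto_add_atTop_iff_nat 1).2
      (tendsto_pontryaginDual_map_id_pow_cofinite hdiv hψ)) A hB
  simp only [coe_id_pow] at tendsto_preimage
  exact tendsto_preimage

end PowerMaps

theorem circle_pow_surjective {n : ℕ} (hn : n ≠ 0) :
    Function.Surjective (fun z : Circle => z ^ n) := by
  intro z
  obtain ⟨t, rfl⟩ := Circle.exp_surjective z
  refine ⟨Circle.exp (t / n), ?_⟩
  simp only [← Circle.exp_nsmul, nsmul_eq_mul]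
  field_simp

/-- For the normalized Haar measure `μ` on the unit circle `𝕋` and any measurable sets
`A, B ⊆ 𝕋`, one has `μ(A ∩ {z : zⁿ ∈ B}) → μ(A) μ(B)` as `n → ∞`. -/
theorem haar_measure_inter_pow_preimage_tendsto
    (μ : Measure Circle) [μ.IsHaarMeasure] [IsProbabilityMeasure μ]
    (A B : Set Circle) (hA : MeasurableSet A) (hB : MeasurableSet B) :
    Tendsto (fun n : ℕ => μ (A ∩ {z : Circle | z ^ n ∈ B})) atTop (𝓝 (μ A * μ B)) :=
  haar_measure_inter_pow_preimage_tendsto_general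
    (fun _ hz => ⟨ContinuousMonoidHom.id Circle, hz⟩) (fun _ hn => circle_pow_surjective hn) μ A hB
end

section
/- Let (z_j)_{j≥0} be a sequence of pairwise distinct complex numbers with |z_j| < 1 for all j and such that the closure of {z_j : j ≥ 0} contains the unit circle ∂𝔻, let (e_j) be an orthonormal basis of an infinite-dimensional separable complex Hilbert space H, let T be the diagonal operator with T e_j = z_j e_j, and let 𝓡 = {p(T) : p a polynomial}. Suppose there is a sequence (w_p)_{p≥1} of pairwise distinct cluster points of {z_j : j ≥ 0} lying in the open unit disc 𝔻 such that Σ_{p≥1} (1 − |w_p|) = ∞. Then 𝓡 is not a localizing algebra. -/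
open Filter Topology

/-!
Suppose `p_j(T)` are contractions with `p_j(T) x_j → y`. Since the eigenvalues accumulate on the
whole circle, each `p_j` is bounded by `1` on the disc. Any ball contains vectors `x_j` whose
coordinates along eigenvectors with eigenvalues tending to `w_p` stay bounded below for every `p`,
while the corresponding coordinates of the norm-convergent sequence `p_j(T) x_j` tend to `0`; hence
`p_j(w_p) → 0` for every `p`. By Schwarz's lemma at finitely many points, a polynomial bounded by
`1` on the disc and small at `w_0, …, w_N` is bounded at `u` by roughly `∏ ρ(w_p, u)`, with `ρ` the
pseudohyperbolic distance, and these products tend to `0` because `∑ (1 - |w_p|)` diverges.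
So `p_j → 0` on the open disc, all coordinates of `y` vanish, and `y = 0`.
-/

section PseudohyperbolicDist

open scoped ComplexConjugate

/-- The pseudohyperbolic distance of `a` and `u`: the modulus at `u` of the Blaschke factor with
zero `a`. It governs Schwarz's lemma on the unit disc; for `‖a‖ < 1` and `‖u‖ ≤ 1` the denominator
does not vanish. -/
noncomputable def pseudohyperbolicDist (a u : ℂ) : ℝ :=
  ‖u - a‖ / ‖1 - conj a * u‖

variable {a u : ℂ}

lemma pseudohyperbolicDist_nonneg (a u : ℂ) : 0 ≤ pseudohyperbolicDist a u := by
  unfold pseudohyperbolicDist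
  positivity

lemma one_sub_norm_le_norm_one_sub_conj_mul (a : ℂ) (hu : ‖u‖ ≤ 1) :
    1 - ‖a‖ ≤ ‖1 - conj a * u‖ :=
  calc 1 - ‖a‖ ≤ 1 - ‖a‖ * ‖u‖ := by
        gcongr
        exact mul_le_of_le_one_right (norm_nonneg a) hu
    _ = ‖(1 : ℂ)‖ - ‖conj a * u‖ := by rw [norm_one, norm_mul, RCLike.norm_conj]
    _ ≤ ‖1 - conj a * u‖ := norm_sub_norm_le _ _

lemma norm_one_sub_conj_mul_pos (ha : ‖a‖ < 1) (hu : ‖u‖ ≤ 1) : 0 < ‖1 - conj a * u‖ :=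
  (sub_pos.2 ha).trans_le (one_sub_norm_le_norm_one_sub_conj_mul a hu)

lemma norm_one_sub_conj_mul_of_norm_eq_one (a : ℂ) (hu : ‖u‖ = 1) :
    ‖1 - conj a * u‖ = ‖u - a‖ := by
  have hfactor : 1 - conj a * u = u * conj (u - a) := by
    rw [map_sub, mul_sub, Complex.mul_conj', hu]
    push_cast
    ring
  rw [hfactor, norm_mul, hu, one_mul, RCLike.norm_conj]

lemma norm_one_sub_conj_mul_sq (a u : ℂ) :
    ‖1 - conj a * u‖ ^ 2 = ‖u - a‖ ^ 2 + (1 - ‖a‖ ^ 2) * (1 - ‖u‖ ^ 2) := by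
  simp only [← Complex.normSq_eq_norm_sq, Complex.normSq_apply, Complex.sub_re, Complex.sub_im,
    Complex.mul_re, Complex.mul_im, Complex.one_re, Complex.one_im, Complex.conj_re,
    Complex.conj_im]
  ring

lemma pseudohyperbolicDist_le_div (ha : ‖a‖ < 1) (hu : ‖u‖ ≤ 1) :
    pseudohyperbolicDist a u ≤ ‖u - a‖ / (1 - ‖a‖) :=
  div_le_div_of_nonneg_left (norm_nonneg _) (sub_pos.2 ha)
    (one_sub_norm_le_norm_one_sub_conj_mul a hu)

lemma pseudohyperbolicDist_sq (ha : ‖a‖ < 1) (hu : ‖u‖ ≤ 1) :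
    pseudohyperbolicDist a u ^ 2 = 1 - (1 - ‖a‖ ^ 2) * (1 - ‖u‖ ^ 2) / ‖1 - conj a * u‖ ^ 2 := by
  have hpos := norm_one_sub_conj_mul_pos ha hu
  rw [pseudohyperbolicDist, div_pow, eq_sub_iff_add_eq, ← add_div, ← norm_one_sub_conj_mul_sq,
    div_self (by positivity)]

lemma pseudohyperbolicDist_le_one (ha : ‖a‖ < 1) (hu : ‖u‖ ≤ 1) :
    pseudohyperbolicDist a u ≤ 1 := by
  have ha' : 0 ≤ 1 - ‖a‖ ^ 2 := sub_nonneg.2 (pow_le_one₀ (norm_nonneg a) ha.le)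
  have hu' : 0 ≤ 1 - ‖u‖ ^ 2 := sub_nonneg.2 (pow_le_one₀ (norm_nonneg u) hu)
  rw [← sq_le_one_iff₀ (pseudohyperbolicDist_nonneg a u), pseudohyperbolicDist_sq ha hu]
  exact sub_le_self _ (by positivity)

lemma pseudohyperbolicDist_sq_le_exp (ha : ‖a‖ < 1) (hu : ‖u‖ ≤ 1) :
    pseudohyperbolicDist a u ^ 2 ≤ Real.exp (-((1 - ‖u‖ ^ 2) / 4 * (1 - ‖a‖))) := by
  have hpos := norm_one_sub_conj_mul_pos ha hu
  have hu' : 0 ≤ 1 - ‖u‖ ^ 2 := sub_nonneg.2 (pow_le_one₀ (norm_nonneg u) hu)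
  have ha' : 1 - ‖a‖ ≤ 1 - ‖a‖ ^ 2 := by nlinarith [norm_nonneg a]
  have hden : ‖1 - conj a * u‖ ≤ 2 :=
    calc ‖1 - conj a * u‖ ≤ ‖(1 : ℂ)‖ + ‖conj a * u‖ := norm_sub_le _ _
      _ = 1 + ‖a‖ * ‖u‖ := by rw [norm_one, norm_mul, RCLike.norm_conj]
      _ ≤ 2 := by linarith [mul_le_one₀ ha.le (norm_nonneg u) hu]
  have hgap : (1 - ‖u‖ ^ 2) / 4 * (1 - ‖a‖) ≤
      (1 - ‖a‖ ^ 2) * (1 - ‖u‖ ^ 2) / ‖1 - conj a * u‖ ^ 2 :=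
    calc (1 - ‖u‖ ^ 2) / 4 * (1 - ‖a‖) = (1 - ‖a‖) * (1 - ‖u‖ ^ 2) / 2 ^ 2 := by ring
      _ ≤ (1 - ‖a‖ ^ 2) * (1 - ‖u‖ ^ 2) / ‖1 - conj a * u‖ ^ 2 := by
        have hprod : 0 ≤ (1 - ‖a‖ ^ 2) * (1 - ‖u‖ ^ 2) :=
          mul_nonneg ((sub_pos.2 ha).le.trans ha') hu'
        gcongr
  calc pseudohyperbolicDist a u ^ 2
      = 1 - (1 - ‖a‖ ^ 2) * (1 - ‖u‖ ^ 2) / ‖1 - conj a * u‖ ^ 2 := pseudohyperbolicDist_sq ha hu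
    _ ≤ 1 - (1 - ‖u‖ ^ 2) / 4 * (1 - ‖a‖) := by gcongr
    _ ≤ Real.exp (-((1 - ‖u‖ ^ 2) / 4 * (1 - ‖a‖))) := Real.one_sub_le_exp_neg _

lemma tendsto_pseudohyperbolicDist_zero {κ : Type*} {l : Filter κ} {ζ : κ → ℂ} (ha : ‖a‖ < 1)
    (hζ : ∀ j, ‖ζ j‖ ≤ 1) (hlim : Tendsto ζ l (𝓝 a)) :
    Tendsto (fun j => pseudohyperbolicDist a (ζ j)) l (𝓝 0) := by
  refine squeeze_zero (fun j => pseudohyperbolicDist_nonneg a (ζ j))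
    (fun j => pseudohyperbolicDist_le_div ha (hζ j)) ?_
  simpa using (tendsto_iff_norm_sub_tendsto_zero.1 hlim).div_const (1 - ‖a‖)

variable {ι : Type*} {w : ι → ℂ}

lemma tendsto_prod_pseudohyperbolicDist_zero (hw : ∀ p, ‖w p‖ < 1)
    (hsum : ¬ Summable fun p => 1 - ‖w p‖) (hu : ‖u‖ < 1) :
    Tendsto (fun S : Finset ι => ∏ p ∈ S, pseudohyperbolicDist (w p) u) atTop (𝓝 0) := by
  set b : ℝ := (1 - ‖u‖ ^ 2) / 4
  have hb : 0 < b := div_pos (sub_pos.2 (pow_lt_one₀ (norm_nonneg u) hu two_ne_zero)) four_pos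
  have hmono : Monotone fun S : Finset ι => ∑ p ∈ S, (1 - ‖w p‖) :=
    Finset.sum_mono_set_of_nonneg fun p => sub_nonneg.2 (hw p).le
  have hdiv : Tendsto (fun S : Finset ι => ∑ p ∈ S, (1 - ‖w p‖)) atTop atTop :=
    (tendsto_atTop_of_monotone hmono).resolve_right hsum
  have hexp : Tendsto (fun S : Finset ι => Real.exp (-(b * ∑ p ∈ S, (1 - ‖w p‖)))) atTop (𝓝 0) :=
    Real.tendsto_exp_neg_atTop_nhds_zero.comp (hdiv.const_mul_atTop hb)
  have hsq : Tendsto (fun S : Finset ι => (∏ p ∈ S, pseudohyperbolicDist (w p) u) ^ 2)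
      atTop (𝓝 0) := by
    refine squeeze_zero (fun S => sq_nonneg _) (fun S => ?_) hexp
    rw [← Finset.prod_pow, Finset.mul_sum, ← Finset.sum_neg_distrib, Real.exp_sum]
    exact Finset.prod_le_prod (fun p _ => sq_nonneg _)
      fun p _ => pseudohyperbolicDist_sq_le_exp (hw p) hu.le
  have hnonneg (S : Finset ι) : 0 ≤ ∏ p ∈ S, pseudohyperbolicDist (w p) u :=
    Finset.prod_nonneg fun p _ => pseudohyperbolicDist_nonneg _ _
  simpa only [Real.sqrt_sq (hnonneg _), Real.sqrt_zero] using hsq.sqrt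

end PseudohyperbolicDist

section PolynomialsOnDisc

open Polynomial Metric
open scoped ComplexConjugate

lemma norm_eval_le_of_forall_mem_sphere {P : ℂ[X]} {M : ℝ}
    (hP : ∀ v ∈ sphere (0 : ℂ) 1, ‖P.eval v‖ ≤ M) {u : ℂ} (hu : ‖u‖ ≤ 1) : ‖P.eval u‖ ≤ M := by
  refine Complex.norm_le_of_forall_mem_frontier_norm_le (U := ball 0 1) isBounded_ball
    P.differentiable.diffContOnCl ?_ ?_
  · rwa [frontier_ball _ one_ne_zero]
  · rwa [closure_ball _ one_ne_zero, mem_closedBall_zero_iff]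

lemma nodal_dvd_of_forall_eval_eq_zero {F ι : Type*} [Field F] {S : Finset ι} {w : ι → F}
    (hinj : Set.InjOn w S) {P : F[X]} (hP : ∀ p ∈ S, P.eval (w p) = 0) :
    Lagrange.nodal S w ∣ P := by
  refine Finset.prod_dvd_of_coprime (fun p hp q hq hpq => ?_) fun p hp => dvd_iff_isRoot.2 (hP p hp)
  exact isCoprime_X_sub_C_of_isUnit_sub (sub_ne_zero.2 (hinj.ne hp hq hpq)).isUnit

variable {ι : Type*} {S : Finset ι} {w : ι → ℂ} {P : ℂ[X]} {M : ℝ} {a u : ℂ}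

-- Schwarz's lemma with several zeros: trading each factor `X - w_p` of `P` for `1 - conj w_p * X`
-- does not change the modulus on the circle.
lemma norm_eval_le_mul_prod_pseudohyperbolicDist (hinj : Set.InjOn w S)
    (hw : ∀ p ∈ S, ‖w p‖ < 1) (hzero : ∀ p ∈ S, P.eval (w p) = 0)
    (hP : ∀ v ∈ sphere (0 : ℂ) 1, ‖P.eval v‖ ≤ M) (hu : ‖u‖ ≤ 1) :
    ‖P.eval u‖ ≤ M * ∏ p ∈ S, pseudohyperbolicDist (w p) u := by
  obtain ⟨Q, rfl⟩ := nodal_dvd_of_forall_eval_eq_zero hinj hzero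
  let R : ℂ[X] := Q * ∏ p ∈ S, (1 - C (conj (w p)) * X)
  have heval (v : ℂ) : ‖(Lagrange.nodal S w * Q).eval v‖ = ‖Q.eval v‖ * ∏ p ∈ S, ‖v - w p‖ := by
    rw [eval_mul, Lagrange.eval_nodal, norm_mul, norm_prod, mul_comm]
  have hevalR (v : ℂ) : ‖R.eval v‖ = ‖Q.eval v‖ * ∏ p ∈ S, ‖1 - conj (w p) * v‖ := by
    simp only [R, eval_mul, eval_prod, eval_sub, eval_one, eval_C, eval_X, norm_mul, norm_prod]
  have hR : ∀ v ∈ sphere (0 : ℂ) 1, ‖R.eval v‖ ≤ M := fun v hv => by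
    have hv' : ‖v‖ = 1 := mem_sphere_zero_iff_norm.1 hv
    simpa only [hevalR, heval, norm_one_sub_conj_mul_of_norm_eq_one _ hv'] using hP v hv
  have hcancel : ∀ p ∈ S,
      ‖u - w p‖ = ‖1 - conj (w p) * u‖ * pseudohyperbolicDist (w p) u := fun p hp =>
    (mul_div_cancel₀ _ (norm_one_sub_conj_mul_pos (hw p hp) hu).ne').symm
  calc ‖(Lagrange.nodal S w * Q).eval u‖
      = ‖R.eval u‖ * ∏ p ∈ S, pseudohyperbolicDist (w p) u := by
        rw [heval, hevalR, Finset.prod_congr rfl hcancel, Finset.prod_mul_distrib, mul_assoc]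
    _ ≤ M * ∏ p ∈ S, pseudohyperbolicDist (w p) u := by
        gcongr
        · exact Finset.prod_nonneg fun p _ => pseudohyperbolicDist_nonneg _ _
        · exact norm_eval_le_of_forall_mem_sphere hR hu

lemma norm_eval_sub_eval_le_mul_pseudohyperbolicDist
    (hP : ∀ v ∈ sphere (0 : ℂ) 1, ‖P.eval v‖ ≤ M) (ha : ‖a‖ < 1) (hu : ‖u‖ ≤ 1) :
    ‖P.eval u - P.eval a‖ ≤ 2 * M * pseudohyperbolicDist a u := by
  have hbound : ∀ v ∈ sphere (0 : ℂ) 1, ‖(P - C (P.eval a)).eval v‖ ≤ 2 * M := fun v hv => by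
    rw [eval_sub, eval_C, two_mul]
    exact norm_sub_le_of_le (hP v hv) (norm_eval_le_of_forall_mem_sphere hP ha.le)
  simpa using norm_eval_le_mul_prod_pseudohyperbolicDist (S := {()}) (w := fun _ => a)
    (by simp) (by simpa using ha) (by simp) hbound hu

lemma exists_norm_eval_interpolate_le {𝕜 ι : Type*} [NormedField 𝕜] [DecidableEq ι] {K : Set 𝕜}
    (hK : IsCompact K) (S : Finset ι) (v : ι → 𝕜) :
    ∃ C : ℝ, ∀ (r : ι → 𝕜), ∀ u ∈ K,
      ‖(Lagrange.interpolate S v r).eval u‖ ≤ C * ∑ p ∈ S, ‖r p‖ := by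
  choose B hB using fun p =>
    hK.exists_bound_of_continuousOn (Lagrange.basis S v p).continuous.continuousOn
  refine ⟨∑ p ∈ S, |B p|, fun r u hu => ?_⟩
  rw [Lagrange.interpolate_apply, eval_finsetSum, Finset.mul_sum]
  refine norm_sum_le_of_le _ fun p hp => ?_
  rw [eval_mul, eval_C, norm_mul, mul_comm]
  gcongr
  calc ‖(Lagrange.basis S v p).eval u‖ ≤ |B p| := (hB p u hu).trans (le_abs_self _)
    _ ≤ ∑ q ∈ S, |B q| := Finset.single_le_sum (fun q _ => abs_nonneg (B q)) hp

-- Apply Schwarz's lemma to `P` minus its interpolation polynomial at the points `w p`.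
lemma exists_norm_eval_le_mul_prod_pseudohyperbolicDist_add (hinj : Set.InjOn w S)
    (hw : ∀ p ∈ S, ‖w p‖ < 1) :
    ∃ C : ℝ, ∀ (P : ℂ[X]) (M : ℝ), (∀ v ∈ sphere (0 : ℂ) 1, ‖P.eval v‖ ≤ M) → ∀ u : ℂ, ‖u‖ ≤ 1 →
      ‖P.eval u‖ ≤ M * ∏ p ∈ S, pseudohyperbolicDist (w p) u + C * ∑ p ∈ S, ‖P.eval (w p)‖ := by
  classical
  obtain ⟨C, hC⟩ := exists_norm_eval_interpolate_le (isCompact_closedBall (0 : ℂ) 1) S w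
  refine ⟨2 * C, fun P M hP u hu => ?_⟩
  set L := Lagrange.interpolate S w fun p => P.eval (w p)
  set δ := C * ∑ p ∈ S, ‖P.eval (w p)‖
  have hL : ∀ v : ℂ, ‖v‖ ≤ 1 → ‖L.eval v‖ ≤ δ := fun v hv =>
    hC _ v (mem_closedBall_zero_iff.2 hv)
  have hδ : 0 ≤ δ := (norm_nonneg _).trans (hL u hu)
  have hzero : ∀ p ∈ S, (P - L).eval (w p) = 0 := fun p hp => by
    rw [eval_sub, Lagrange.eval_interpolate_at_node _ hinj hp, sub_self]
  have hbound : ∀ v ∈ sphere (0 : ℂ) 1, ‖(P - L).eval v‖ ≤ M + δ := fun v hv => by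
    rw [eval_sub]
    exact norm_sub_le_of_le (hP v hv) (hL v (mem_sphere_zero_iff_norm.1 hv).le)
  have hprod : ∏ p ∈ S, pseudohyperbolicDist (w p) u ≤ 1 :=
    Finset.prod_le_one (fun p _ => pseudohyperbolicDist_nonneg _ _)
      fun p hp => pseudohyperbolicDist_le_one (hw p hp) hu
  calc ‖P.eval u‖ = ‖(P - L).eval u + L.eval u‖ := by rw [eval_sub, sub_add_cancel]
    _ ≤ (M + δ) * ∏ p ∈ S, pseudohyperbolicDist (w p) u + δ :=
      norm_add_le_of_le (norm_eval_le_mul_prod_pseudohyperbolicDist hinj hw hzero hbound hu)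
        (hL u hu)
    _ ≤ M * ∏ p ∈ S, pseudohyperbolicDist (w p) u + (δ + δ) := by
      linarith [mul_le_of_le_one_right hδ hprod]
    _ = M * ∏ p ∈ S, pseudohyperbolicDist (w p) u + 2 * C * ∑ p ∈ S, ‖P.eval (w p)‖ := by ring

variable {κ : Type*} {l : Filter κ} {g : κ → ℂ[X]}

lemma tendsto_eval_zero_of_tendsto_eval_zero {ζ : κ → ℂ}
    (hg : ∀ j, ∀ v ∈ sphere (0 : ℂ) 1, ‖(g j).eval v‖ ≤ M) (ha : ‖a‖ < 1) (hζ : ∀ j, ‖ζ j‖ ≤ 1)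
    (hlim : Tendsto ζ l (𝓝 a)) (hzero : Tendsto (fun j => (g j).eval (ζ j)) l (𝓝 0)) :
    Tendsto (fun j => (g j).eval a) l (𝓝 0) := by
  have hdiff : Tendsto (fun j => (g j).eval (ζ j) - (g j).eval a) l (𝓝 0) :=
    squeeze_zero_norm
      (fun j => norm_eval_sub_eval_le_mul_pseudohyperbolicDist (hg j) ha (hζ j))
      (by simpa using (tendsto_pseudohyperbolicDist_zero ha hζ hlim).const_mul (2 * M))
  simpa using hzero.sub hdiff

lemma tendsto_eval_zero_of_not_summable (hinj : Function.Injective w) (hw : ∀ p, ‖w p‖ < 1)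
    (hsum : ¬ Summable fun p => 1 - ‖w p‖)
    (hg : ∀ j, ∀ v ∈ sphere (0 : ℂ) 1, ‖(g j).eval v‖ ≤ M)
    (hzero : ∀ p, Tendsto (fun j => (g j).eval (w p)) l (𝓝 0)) (hu : ‖u‖ < 1) :
    Tendsto (fun j => (g j).eval u) l (𝓝 0) := by
  rw [NormedAddGroup.tendsto_nhds_zero]
  intro ε hε
  have hprod : Tendsto (fun S : Finset ι => M * ∏ p ∈ S, pseudohyperbolicDist (w p) u)
      atTop (𝓝 0) := by
    simpa using (tendsto_prod_pseudohyperbolicDist_zero hw hsum hu).const_mul M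
  obtain ⟨S, hS⟩ := (hprod.eventually_lt_const (half_pos hε)).exists
  obtain ⟨C, hC⟩ := exists_norm_eval_le_mul_prod_pseudohyperbolicDist_add (hinj.injOn (s := S))
    fun p _ => hw p
  have hsmall : Tendsto (fun j => C * ∑ p ∈ S, ‖(g j).eval (w p)‖) l (𝓝 0) := by
    simpa using (tendsto_finsetSum S fun p _ => (hzero p).norm).const_mul C
  filter_upwards [hsmall.eventually_lt_const (half_pos hε)] with j hj
  linarith [hC (g j) M (hg j) u hu.le]

end PolynomialsOnDisc

section ClusterPoints

variable {ι α : Type*}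

lemma mapClusterPt_cofinite_of_accPt_range [TopologicalSpace α] [T1Space α] {z : ι → α} {a : α}
    (h : AccPt a (𝓟 (Set.range z))) : MapClusterPt a cofinite z := by
  refine mapClusterPt_iff_frequently.2 fun U hU => ?_
  have hinf : (U ∩ Set.range z).Infinite := Set.Infinite.of_accPt (h.nhds_inter hU)
  rw [← Set.image_preimage_eq_inter_range] at hinf
  exact frequently_cofinite_mem_iff_infinite.2 hinf.of_image

-- `cofinite` is not countably generated for uncountable `ι`, so the distinct indices are chosen
-- one after the other.
lemma exists_seq_tendsto_cofinite_of_mapClusterPt [PseudoMetricSpace α] {z : ι → α} {a : α}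
    (h : MapClusterPt a cofinite z) :
    ∃ k : ℕ → ι, Tendsto k atTop cofinite ∧ Tendsto (z ∘ k) atTop (𝓝 a) := by
  classical
  obtain ⟨f, hclose, hstep⟩ := exists_seq_of_forall_finset_exists
    (fun q : ℕ × ι => dist (z q.2) a < 1 / ((q.1 : ℝ) + 1))
    (fun q q' => q.1 < q'.1 ∧ q.2 ≠ q'.2) fun s _ => by
      set m := s.sup Prod.fst + 1
      have hfreq := mapClusterPt_iff_frequently.1 h _
        (Metric.ball_mem_nhds a (Nat.one_div_pos_of_nat (n := m)))
      obtain ⟨i, hi, hnew⟩ :=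
        (hfreq.and_eventually (s.image Prod.snd).eventually_cofinite_notMem).exists
      refine ⟨(m, i), hi, fun q hq => ⟨Nat.lt_succ_of_le (Finset.le_sup hq), ?_⟩⟩
      rintro rfl
      exact hnew (Finset.mem_image_of_mem _ hq)
  have hmono : StrictMono fun n => (f n).1 := fun m n hmn => (hstep m n hmn).1
  have hinj : Function.Injective fun n => (f n).2 :=
    .of_lt_imp_ne fun m n hmn => (hstep m n hmn).2
  refine ⟨fun n => (f n).2, Nat.cofinite_eq_atTop ▸ hinj.tendsto_cofinite,
    tendsto_iff_dist_tendsto_zero.2 ?_⟩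
  exact squeeze_zero (fun _ => dist_nonneg) (fun n => (hclose n).le)
    (tendsto_one_div_add_atTop_nhds_zero_nat.comp hmono.tendsto_atTop)

end ClusterPoints

section Orthonormal

open scoped InnerProductSpace

variable {𝕜 E ι κ : Type*} [RCLike 𝕜] [NormedAddCommGroup E] [InnerProductSpace 𝕜 E] {e : ι → E}

lemma tendsto_inner_cofinite_zero (he : Orthonormal 𝕜 e) (v : E) :
    Tendsto (fun i => ⟪e i, v⟫_𝕜) cofinite (𝓝 0) := by
  rw [tendsto_zero_iff_norm_tendsto_zero]
  simpa [Real.sqrt_sq] using (he.inner_products_summable v).tendsto_cofinite_zero.sqrt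

variable {l : Filter κ} {i : κ → ι}

lemma tendsto_inner_zero_of_tendsto_cofinite (he : Orthonormal 𝕜 e) (hi : Tendsto i l cofinite)
    {x : κ → E} {y : E} (hx : Tendsto x l (𝓝 y)) :
    Tendsto (fun j => ⟪e (i j), x j⟫_𝕜) l (𝓝 0) := by
  have hdiff : Tendsto (fun j => ⟪e (i j), x j - y⟫_𝕜) l (𝓝 0) := by
    refine squeeze_zero_norm (fun j => ?_) (tendsto_iff_norm_sub_tendsto_zero.1 hx)
    simpa [he.norm_eq_one] using norm_inner_le_norm (𝕜 := 𝕜) (e (i j)) (x j - y)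
  simpa [inner_sub_right] using hdiff.add ((tendsto_inner_cofinite_zero he y).comp hi)

lemma tendsto_multiplier_zero (he : Orthonormal 𝕜 e) (hi : Tendsto i l cofinite) {b : ℝ}
    (hb : 0 < b) {c y : E} {d x : κ → E} {s : κ → 𝕜} (hd : ∀ j, b ≤ ‖⟪e (i j), d j⟫_𝕜‖)
    (hx : Tendsto x l (𝓝 y)) (hmul : ∀ j, ⟪e (i j), x j⟫_𝕜 = s j * ⟪e (i j), c + d j⟫_𝕜) :
    Tendsto s l (𝓝 0) := by
  have hc : Tendsto (fun j => ‖⟪e (i j), c⟫_𝕜‖) l (𝓝 0) := by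
    simpa using ((tendsto_inner_cofinite_zero he c).comp hi).norm
  have hxi : Tendsto (fun j => ‖⟪e (i j), x j⟫_𝕜‖ / (b / 2)) l (𝓝 0) := by
    simpa using (tendsto_inner_zero_of_tendsto_cofinite he hi hx).norm.div_const (b / 2)
  refine squeeze_zero_norm' ?_ hxi
  filter_upwards [hc.eventually_lt_const (half_pos hb)] with j hj
  have hlower : b / 2 ≤ ‖⟪e (i j), c + d j⟫_𝕜‖ := by
    rw [inner_add_right, add_comm]
    linarith [hd j, norm_sub_le_norm_add ⟪e (i j), d j⟫_𝕜 ⟪e (i j), c⟫_𝕜]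
  rw [le_div_iff₀ (half_pos hb), hmul, norm_mul]
  gcongr

lemma inner_eq_zero_of_tendsto_multiplier_zero [l.NeBot] {s : κ → 𝕜} (hs : Tendsto s l (𝓝 0))
    {u y : E} {v x : κ → E} {B : ℝ} (hv : ∀ j, ‖v j‖ ≤ B) (hx : Tendsto x l (𝓝 y))
    (hmul : ∀ j, ⟪u, x j⟫_𝕜 = s j * ⟪u, v j⟫_𝕜) : ⟪u, y⟫_𝕜 = 0 := by
  have hbound (j : κ) : ‖⟪u, v j⟫_𝕜‖ ≤ ‖u‖ * B :=
    (norm_inner_le_norm u (v j)).trans (by gcongr; exact hv j)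
  refine tendsto_nhds_unique (tendsto_const_nhds.inner hx) ?_
  simp only [hmul]
  exact hs.zero_mul_isBoundedUnder_le (isBoundedUnder_of ⟨‖u‖ * B, hbound⟩)

lemma exists_norm_le_forall_le_norm_inner [CompleteSpace E] (he : Orthonormal 𝕜 e) (k : κ → ι)
    {a : κ → ℝ} {r : ℝ} (ha : ∀ p, 0 ≤ a p) (hr : HasSum a r) :
    ∃ d : E, ‖d‖ ≤ r ∧ ∀ p, a p ≤ ‖⟪e (k p), d⟫_𝕜‖ := by
  classical
  have hnorm (p : κ) : ‖(a p : 𝕜) • e (k p)‖ = a p := by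
    rw [norm_smul, he.norm_eq_one, mul_one, RCLike.norm_of_nonneg (ha p)]
  have hsummable : Summable fun p => (a p : 𝕜) • e (k p) :=
    .of_norm (by simpa only [hnorm] using hr.summable)
  refine ⟨∑' p, (a p : 𝕜) • e (k p), tsum_of_norm_bounded hr fun p => (hnorm p).le, fun p => ?_⟩
  have hcoord : HasSum (fun q => if k p = k q then a q else 0)
      (RCLike.re ⟪e (k p), ∑' q, (a q : 𝕜) • e (k q)⟫_𝕜) := by
    refine (RCLike.hasSum_re 𝕜 (hsummable.hasSum.mapL (innerSL 𝕜 (e (k p))))).congr_fun fun q => ?_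
    rw [innerSL_apply_apply, inner_smul_right, orthonormal_iff_ite.1 he]
    split_ifs <;> simp
  calc a p = if k p = k p then a p else 0 := (if_pos rfl).symm
    _ ≤ RCLike.re ⟪e (k p), ∑' q, (a q : 𝕜) • e (k q)⟫_𝕜 :=
      le_hasSum hcoord p fun q _ => by split_ifs <;> simp [ha q]
    _ ≤ ‖⟪e (k p), ∑' q, (a q : 𝕜) • e (k q)⟫_𝕜‖ := RCLike.re_le_norm _

lemma eq_zero_of_forall_inner_hilbertBasis_eq_zero (e : HilbertBasis ι 𝕜 E) {y : E}
    (h : ∀ i, ⟪e i, y⟫_𝕜 = 0) : y = 0 := by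
  refine e.repr.map_eq_zero_iff.1 (lp.ext (funext fun i => ?_))
  rw [e.repr_apply_apply, h i, lp.coeFn_zero, Pi.zero_apply]

lemma inner_apply_of_forall_apply_eq_smul (e : HilbertBasis ι 𝕜 E) {s : ι → 𝕜} {A : E →L[𝕜] E}
    (hA : ∀ i, A (e i) = s i • e i) (i : ι) (v : E) :
    ⟪e i, A v⟫_𝕜 = s i * ⟪e i, v⟫_𝕜 := by
  classical
  have hdense : Dense (Submodule.span 𝕜 (Set.range e) : Set E) :=
    Submodule.dense_iff_topologicalClosure_eq_top.2 e.dense_span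
  suffices h : innerSL 𝕜 (e i) ∘L A = s i • innerSL 𝕜 (e i) from DFunLike.congr_fun h v
  refine ContinuousLinearMap.ext_on hdense ?_
  rintro _ ⟨j, rfl⟩
  simp only [ContinuousLinearMap.comp_apply, smul_apply, innerSL_apply_apply,
    hA, inner_smul_right, smul_eq_mul, orthonormal_iff_ite.1 e.orthonormal]
  split_ifs with hij <;> simp [hij]

end Orthonormal

section Eigenvectors

open Polynomial

lemma aeval_apply_of_apply_eq_smul {R M : Type*} [CommRing R] [TopologicalSpace M]
    [AddCommGroup M] [Module R M] [IsTopologicalAddGroup M] [ContinuousConstSMul R M]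
    {T : M →L[R] M} {μ : R} {v : M} (hv : T v = μ • v) (p : R[X]) :
    aeval T p v = p.eval μ • v := by
  induction p using Polynomial.induction_on with
  | C a => simp [Algebra.algebraMap_eq_smul_one]
  | add p q hp hq => simp [hp, hq, add_smul]
  | monomial n a ih =>
    rw [pow_succ, ← mul_assoc, map_mul, aeval_X, mul_apply_eq_comp, hv, map_smul, ih,
      smul_smul, eval_mul_X, mul_comm]

lemma norm_eval_le_norm_aeval_of_mem_closure {𝕜 E ι : Type*} [NontriviallyNormedField 𝕜]
    [NormedAddCommGroup E] [NormedSpace 𝕜 E] {T : E →L[𝕜] E} {v : ι → E} {z : ι → 𝕜}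
    (hv : ∀ i, v i ≠ 0) (hT : ∀ i, T (v i) = z i • v i) (p : 𝕜[X])
    {u : 𝕜} (hu : u ∈ closure (Set.range z)) :
    ‖p.eval u‖ ≤ ‖aeval T p‖ := by
  have hclosed : IsClosed {u : 𝕜 | ‖p.eval u‖ ≤ ‖aeval T p‖} :=
    isClosed_le p.continuous.norm continuous_const
  refine closure_minimal (Set.range_subset_iff.2 fun i => ?_) hclosed hu
  refine le_of_mul_le_mul_right ?_ (norm_pos_iff.2 (hv i))
  rw [← norm_smul, ← aeval_apply_of_apply_eq_smul (hT i)]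
  exact (aeval T p).le_opNorm (v i)

end Eigenvectors

-- `MapClusterPt _ cofinite z` also admits eigenvalues of infinite multiplicity, which need not be
-- accumulation points of the set `range z`.
theorem diagonal_algebra_not_localizing_of_nonBlaschke_cluster_points_general
    {ι H : Type*} [NormedAddCommGroup H] [InnerProductSpace ℂ H] [CompleteSpace H]
    (e : HilbertBasis ι ℂ H) (z : ι → ℂ) (hz : ∀ i, ‖z i‖ < 1)
    (hsphere : Metric.sphere (0 : ℂ) 1 ⊆ closure (Set.range z))
    (T : H →L[ℂ] H) (hT : ∀ i, T (e i) = z i • e i)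
    (w : ℕ → ℂ) (hwd : Function.Injective w) (hw1 : ∀ p, ‖w p‖ < 1)
    (hacc : ∀ p, MapClusterPt (w p) cofinite z)
    (hsum : ¬ Summable fun p => 1 - ‖w p‖) :
    ¬ IsLocalizing {X : H →L[ℂ] H | ∃ p : Polynomial ℂ, X = Polynomial.aeval T p} := by
  rintro ⟨c, r, hr, -, hB⟩
  choose k hk hkz using fun p => exists_seq_tendsto_cofinite_of_mapClusterPt (hacc p)
  choose d hdr hd using fun n => exists_norm_le_forall_le_norm_inner e.orthonormal (k · n)
    (fun p => (by positivity : 0 ≤ r / 2 / 2 ^ p)) (hasSum_geometric_two' r)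
  obtain ⟨n, X, y, hn, hX, hX1, hy, hlim⟩ := hB (fun n => c + d n) (by simpa using hdr)
  choose g hg using hX
  obtain rfl : X = fun j => Polynomial.aeval T (g j) := funext hg
  have hcoord (j : ℕ) (i : ι) (v : H) : inner ℂ (e i) (Polynomial.aeval T (g j) v) =
      (g j).eval (z i) * inner ℂ (e i) v :=
    inner_apply_of_forall_apply_eq_smul e (fun i => aeval_apply_of_apply_eq_smul (hT i) (g j)) i v
  have hg1 (j) : ∀ u ∈ Metric.sphere (0 : ℂ) 1, ‖(g j).eval u‖ ≤ 1 := fun u hu =>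
    (norm_eval_le_norm_aeval_of_mem_closure e.orthonormal.ne_zero hT (g j) (hsphere hu)).trans
      (hX1 j)
  have hgw (p) : Tendsto (fun j => (g j).eval (w p)) atTop (𝓝 0) :=
    tendsto_eval_zero_of_tendsto_eval_zero hg1 (hw1 p) (fun _ => (hz _).le)
      ((hkz p).comp hn.tendsto_atTop)
      (tendsto_multiplier_zero e.orthonormal ((hk p).comp hn.tendsto_atTop)
        (by positivity : 0 < r / 2 / 2 ^ p) (fun j => hd (n j) p) hlim fun j => hcoord j _ _)
  have hgz (i) : Tendsto (fun j => (g j).eval (z i)) atTop (𝓝 0) :=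
    tendsto_eval_zero_of_not_summable hwd hw1 hsum hg1 hgw (hz i)
  exact hy <| eq_zero_of_forall_inner_hilbertBasis_eq_zero e fun i =>
    inner_eq_zero_of_tendsto_multiplier_zero (hgz i) (fun j => norm_add_le_of_le le_rfl (hdr (n j)))
      hlim fun j => hcoord j i _

/-- Let `T = diag(z_j)` be a diagonal operator with distinct diagonal entries in the open
unit disc accumulating at every point of the unit circle. If there is a sequence `(w_p)` of
distinct cluster points of `{z_j}` in the open unit disc with `∑ (1 − |w_p|) = ∞`, then the
unital algebra `𝓡 = {p(T)}` is not localizing. -/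
theorem diagonal_algebra_not_localizing_of_nonBlaschke_cluster_points
    {H : Type*} [NormedAddCommGroup H] [InnerProductSpace ℂ H] [CompleteSpace H]
    (e : HilbertBasis ℕ ℂ H) (z : ℕ → ℂ) (hzd : Function.Injective z)
    (hz : ∀ j, ‖z j‖ < 1)
    (hsphere : Metric.sphere (0 : ℂ) 1 ⊆ closure (Set.range z))
    (T : H →L[ℂ] H) (hT : ∀ j, T (e j) = z j • e j)
    (w : ℕ → ℂ) (hwd : Function.Injective w) (hw1 : ∀ p, ‖w p‖ < 1)
    (hacc : ∀ p, AccPt (w p) (Filter.principal (Set.range z)))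
    (hsum : ¬ Summable fun p => 1 - ‖w p‖) :
    ¬ IsLocalizing {X : H →L[ℂ] H | ∃ p : Polynomial ℂ, X = Polynomial.aeval T p} := by
  exact diagonal_algebra_not_localizing_of_nonBlaschke_cluster_points_general e z hz hsphere T hT
    w hwd hw1 (fun p => mapClusterPt_cofinite_of_accPt_range (hacc p)) hsum
end
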